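/- arXiv:2407.06550 — 3 statements merged into one kernel-verified Lean document; each statement's English description precedes it below -/
import Mathlib

section
/- Let ε = #{i : 1 ≤ i ≤ m, q_i ≥ 3}. The Terwilliger algebra of 𝔛(m,1) with respect to the base point 0, i.e. the unital ℂ-subalgebra of Mat_X(ℂ) generated by {A_0,…,A_m} ∪ {E_0^*,…,E_m^*}, is isomorphic as a ℂ-algebra to the direct product Mat_{m+1}(ℂ) × ℂ^{m(m−1)/2 + ε}. -/
/-!
For `x, y ∈ X` let `d(x, y)` be the last position where `x` and `y` differ (`0` if `x = y`). This is
an ultrametric, the `A_j` are the matrices of the relations `d(x, y) = j`, and `E*_j` projects onto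
the sphere of radius `j` about `0`. All that is used about `X` is that a ball of radius `t` has
`b_t = q_1 ⋯ q_t` points (`HomUltra`).

If `x` and `y` lie on different spheres `i ≠ j`, the ultrametric inequality forces
`d(x, y) = max(i, j)`, so off the diagonal the blocks of the Terwilliger algebra are constant; they
and the constant diagonal blocks give a system of matrix units `U_ij`, `0 ≤ i, j ≤ m`. On the sphere
of radius `i`, the averages `W_{i,t}` over balls of radius `t < i` satisfy
`W_{i,s} W_{i,t} = W_{i,max(s,t)}`, and they are followed by the average `W_{i,i} = U_ii` over the
whole sphere. The differences `P_{i,t} = W_{i,t} - W_{i,t+1}`, `0 ≤ t < i`, are therefore orthogonal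
idempotents which annihilate all `U_jk`, and telescoping gives `∑ U_ii + ∑ P_{i,t} = 1`. The `U_ij`
and `P_{i,t}` span the algebra (`sum_adjD_eq`), which is hence `Mat_{m+1}(ℂ) × ℂ^N`, where `N` is
the number of nonzero `P_{i,t}` (`wedderburn_of_units`). Finally `P_{i,t} ≠ 0` exactly when
`t + 1 < i` or `q_i ≥ 3` (`pMat_ne_zero`), so `N = m(m-1)/2 + ε` (`card_pairs`).
-/

open Matrix BigOperators

noncomputable section

namespace OHS

variable (m : ℕ) (q : ℕ → ℕ)

/-- The vertex set `X = ∏_{s=1}^m ℤ/q_sℤ` of `𝔛(m,1)`. -/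
abbrev Vtx : Type := (i : Fin m) → ZMod (q ((i : ℕ) + 1))

/-- The adjacency matrices `A_j` of `𝔛(m,1)`, given entrywise
(the Kronecker product `J_1⊗⋯⊗J_{j−1}⊗(J_j−I_j)⊗I_{j+1}⊗⋯⊗I_m`, and `A_0` the identity). -/
def AdjOne (j : ℕ) : Matrix (Vtx m q) (Vtx m q) ℂ :=
  Matrix.of fun x y => ∏ i : Fin m,
    if (i : ℕ) + 1 < j then (1 : ℂ)
    else if (i : ℕ) + 1 = j then (if x i = y i then 0 else 1)
    else if x i = y i then 1 else 0

/-- The primitive idempotents `E_j` of `𝔛(m,1)`, given entrywise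
(`E_0 = J̃_1⊗⋯⊗J̃_m`, `E_j = J̃_1⊗⋯⊗J̃_{m−j}⊗(I_{m−j+1}−J̃_{m−j+1})⊗I_{m−j+2}⊗⋯⊗I_m`). -/
def IdemOne (j : ℕ) : Matrix (Vtx m q) (Vtx m q) ℂ :=
  Matrix.of fun x y => ∏ i : Fin m,
    if (i : ℕ) + 1 < m - j + 1 then ((q ((i : ℕ) + 1) : ℂ))⁻¹
    else if (i : ℕ) + 1 = m - j + 1 then
      (if x i = y i then (1 : ℂ) else 0) - ((q ((i : ℕ) + 1) : ℂ))⁻¹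
    else if x i = y i then 1 else 0

/-- The dual primitive idempotents `E*_j` w.r.t. the base point `0`:
the diagonal matrix whose `(y,y)` entry is the `(0,y)` entry of `A_j`. -/
def DualIdemOne (j : ℕ) : Matrix (Vtx m q) (Vtx m q) ℂ :=
  Matrix.diagonal fun y => AdjOne m q j 0 y

/-- The valency `k_j`: `k_0 = 1` and `k_j = (q_j−1)∏_{s<j} q_s`. -/
def valency (j : ℕ) : ℕ :=
  ∏ i : Fin m,
    if (i : ℕ) + 1 < j then q ((i : ℕ) + 1)
    else if (i : ℕ) + 1 = j then q ((i : ℕ) + 1) - 1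
    else 1

/-- The multiplicity `m_j`: `m_0 = 1` and `m_j = (q_{m−j+1}−1)∏_{s=m−j+2}^m q_s`. -/
def multiplicity (j : ℕ) : ℕ :=
  ∏ i : Fin m,
    if m - j + 1 < (i : ℕ) + 1 then q ((i : ℕ) + 1)
    else if (i : ℕ) + 1 = m - j + 1 then q ((i : ℕ) + 1) - 1
    else 1

section WithFintype

variable [∀ i, NeZero (q i)]

/-- `F_j = (|X|/m_j)·E_j E*_0 E_j`. -/
def Fmat (j : ℕ) : Matrix (Vtx m q) (Vtx m q) ℂ :=
  ((Fintype.card (Vtx m q) : ℂ) / (multiplicity m q j : ℂ)) •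
    (IdemOne m q j * DualIdemOne m q 0 * IdemOne m q j)

/-- `F*_j = (|X|/k_j)·E*_j E_0 E*_j`. -/
def FmatStar (j : ℕ) : Matrix (Vtx m q) (Vtx m q) ℂ :=
  ((Fintype.card (Vtx m q) : ℂ) / (valency m q j : ℂ)) •
    (DualIdemOne m q j * IdemOne m q 0 * DualIdemOne m q j)

/-- `G_j = E_j − F_j`. -/
def Gmat (j : ℕ) : Matrix (Vtx m q) (Vtx m q) ℂ := IdemOne m q j - Fmat m q j

/-- `G*_j = E*_j − F*_j`. -/
def GmatStar (j : ℕ) : Matrix (Vtx m q) (Vtx m q) ℂ :=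
  DualIdemOne m q j - FmatStar m q j

/-- The Terwilliger algebra of `𝔛(m,1)` w.r.t. the base point `0`: the unital
ℂ-subalgebra generated by the adjacency matrices and the dual idempotents. -/
def Ter1 : Subalgebra ℂ (Matrix (Vtx m q) (Vtx m q) ℂ) :=
  Algebra.adjoin ℂ
    ({M | ∃ j ≤ m, M = AdjOne m q j} ∪ {M | ∃ j ≤ m, M = DualIdemOne m q j})

end WithFintype

/-- `Λ(m)`: pairs `(i,j)` with `1 ≤ i,j ≤ m` and either `i+j > m+1`,
or `i+j = m+1` and `q_i ≥ 3`. -/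
def LamSet : Finset (ℕ × ℕ) :=
  ((Finset.Icc 1 m) ×ˢ (Finset.Icc 1 m)).filter
    fun p => m + 1 < p.1 + p.2 ∨ (p.1 + p.2 = m + 1 ∧ 3 ≤ q p.1)

variable (n : ℕ)

/-- The largest (1-based) position where `v` is nonzero; `0` if `v = 0`. -/
def level (v : Vtx m q) : ℕ :=
  (Finset.univ.filter fun i : Fin m => v i ≠ 0).sup fun i => (i : ℕ) + 1

/-- `I(m,n)`: tuples `(λ_0,…,λ_m)` of naturals summing to `n`. -/
def ShapeSet : Finset (Fin (m + 1) → ℕ) :=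
  (Fintype.piFinset fun _ : Fin (m + 1) => Finset.range (n + 1)).filter
    fun lam => ∑ j, lam j = n

/-- `x ∈ X^n` has shape `λ`. -/
def hasShape (x : Fin n → Vtx m q) (lam : Fin (m + 1) → ℕ) : Prop :=
  ∀ j : Fin (m + 1),
    (Finset.univ.filter fun i : Fin n => level m q (x i) = (j : ℕ)).card = lam j

instance (x : Fin n → Vtx m q) (lam : Fin (m + 1) → ℕ) :
    Decidable (hasShape m q n x lam) := by
  unfold hasShape; infer_instance

/-- The `λ`-th adjacency matrix `𝐀_λ` of the ordered Hamming scheme `𝔛(m,n)`. -/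
def AdjN (lam : Fin (m + 1) → ℕ) :
    Matrix (Fin n → Vtx m q) (Fin n → Vtx m q) ℂ :=
  Matrix.of fun x y => if hasShape m q n (fun i => x i - y i) lam then 1 else 0

/-- The `λ`-th dual primitive idempotent `𝐄*_λ` of `𝔛(m,n)` (base point `0`). -/
def DualIdemN (lam : Fin (m + 1) → ℕ) :
    Matrix (Fin n → Vtx m q) (Fin n → Vtx m q) ℂ :=
  Matrix.diagonal fun y => if hasShape m q n y lam then 1 else 0

/-- `L_λ(M_•)`: entrywise, the sum over functions `f` with `#f⁻¹(j) = λ_j` of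
`∏_i (M_{f(i)})_{x_i,y_i}`. -/
def Lmat {ι : Type*} [Fintype ι] [DecidableEq ι]
    (M : ι → Matrix (Vtx m q) (Vtx m q) ℂ) (lam : ι → ℕ) :
    Matrix (Fin n → Vtx m q) (Fin n → Vtx m q) ℂ :=
  Matrix.of fun x y =>
    ∑ f ∈ Finset.univ.filter
        (fun f : Fin n → ι =>
          ∀ j, (Finset.univ.filter fun i => f i = j).card = lam j),
      ∏ i, M (f i) (x i) (y i)

/-- The Kronecker product `M_1⊗⋯⊗M_n`. -/
def kron (M : Fin n → Matrix (Vtx m q) (Vtx m q) ℂ) :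
    Matrix (Fin n → Vtx m q) (Fin n → Vtx m q) ℂ :=
  Matrix.of fun x y => ∏ i, M i (x i) (y i)

section WithFintype2

variable [∀ i, NeZero (q i)]

/-- The Terwilliger algebra `𝐓(m,n)` of `𝔛(m,n)` w.r.t. the zero base point. -/
def TerN : Subalgebra ℂ (Matrix (Fin n → Vtx m q) (Fin n → Vtx m q) ℂ) :=
  Algebra.adjoin ℂ
    ({M | ∃ lam ∈ ShapeSet m n, M = AdjN m q n lam} ∪
      {M | ∃ lam ∈ ShapeSet m n, M = DualIdemN m q n lam})

end WithFintype2

/-- The entry `P_i(j; r)` of the first eigenmatrix for the parameter sequence `r`. -/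
def PEnt (r : ℕ → ℕ) (i j : ℕ) : ℂ :=
  if i + j < m + 1 then (valency m r i : ℂ)
  else if i + j = m + 1 then -(valency m r i : ℂ) / ((r i : ℂ) - 1)
  else 0

/-- The multivariate Krawtchouk polynomial `K_μ(λ; r_1,…,r_m)`: the coefficient of
`z^μ` in `∏_{j=0}^m (Σ_{i=0}^m P_i(j;r) z_i)^{λ_j}`. -/
def Kraw (r : ℕ → ℕ) (mu lam : Fin (m + 1) → ℕ) : ℂ :=
  MvPolynomial.coeff (Finsupp.equivFunOnFinite.symm mu)
    (∏ j : Fin (m + 1),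
      (∑ i : Fin (m + 1),
        MvPolynomial.C (PEnt m r (i : ℕ) (j : ℕ)) * MvPolynomial.X i) ^ lam j)

/-- `C(m,n)`: tuples `(τ_1,…,τ_m)` of naturals summing to `n`. -/
def Ctuples : Finset (Fin m → ℕ) :=
  (Fintype.piFinset fun _ : Fin m => Finset.range (n + 1)).filter
    fun t => ∑ i, t i = n

/-- `Θ(λ,μ)`: nonnegative-integer `m×m` matrices supported on `Λ(m)` with row
sums `λ` and column sums `μ`. -/
def ThetaSet (lam mu : Fin m → ℕ) : Finset (Fin m → Fin m → ℕ) :=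
  (Fintype.piFinset fun _ : Fin m =>
      Fintype.piFinset fun _ : Fin m => Finset.range (n + 1)).filter
    fun c =>
      (∀ i j : Fin m, ((i : ℕ) + 1, (j : ℕ) + 1) ∉ LamSet m q → c i j = 0) ∧
      (∀ i, ∑ j, c i j = lam i) ∧ (∀ j, ∑ i, c i j = mu j)

/-- `Ω(m,n)`: the pairs `(λ,μ)` with `Θ(λ,μ) ≠ ∅`. -/
def OmegaSet : Finset ((Fin m → ℕ) × (Fin m → ℕ)) :=
  ((Ctuples m n) ×ˢ (Ctuples m n)).filter
    fun p => (ThetaSet m q n p.1 p.2).Nonempty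

/-- The permutation matrix `P_σ` of the coordinate permutation
`(x_1,…,x_n) ↦ (x_{σ⁻¹(1)},…,x_{σ⁻¹(n)})` of `X^n`. -/
def permMat (σ : Equiv.Perm (Fin n)) :
    Matrix (Fin n → Vtx m q) (Fin n → Vtx m q) ℂ :=
  Matrix.of fun x y => if x = y ∘ ⇑σ⁻¹ then 1 else 0

/-! ### Matrix units together with orthogonal idempotents -/

/-- Matrix units `e i j` and orthogonal idempotents `p a` which annihilate them, with
`∑ e i i + ∑ p a = 1`, identify the algebra they span with `Mat × ℂ^κ`, where `κ` indexes the
idempotents `p a` that are not zero. Here that algebra is described as the one generated by a set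
`S` lying in their span. -/
theorem wedderburn_of_units {A ι σ : Type*} [Ring A] [Algebra ℂ A] [Fintype ι] [DecidableEq ι]
    [Fintype σ] [DecidableEq σ] (e : ι → ι → A) (p : σ → A)
    (hee : ∀ i j k l, e i j * e k l = if j = k then e i l else 0)
    (hpp : ∀ a b, p a * p b = if a = b then p a else 0)
    (hep : ∀ i j a, e i j * p a = 0) (hpe : ∀ i j a, p a * e i j = 0)
    (hsum : ∑ i, e i i + ∑ a, p a = 1) (he : ∀ i, e i i ≠ 0) (S : Set A)
    (heS : ∀ i j, e i j ∈ Algebra.adjoin ℂ S) (hpS : ∀ a, p a ∈ Algebra.adjoin ℂ S)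
    (hS : ∀ s ∈ S, s ∈ Submodule.span ℂ ({x | ∃ i j, x = e i j} ∪ {x | ∃ a, x = p a})) :
    Nonempty (↥(Algebra.adjoin ℂ S) ≃ₐ[ℂ] (Matrix ι ι ℂ × ({a // p a ≠ 0} → ℂ))) := by
  classical
  -- The inverse isomorphism `(B, c) ↦ ∑ B i j • e i j + ∑ c a • p a`.
  let L : (Matrix ι ι ℂ × ({a // p a ≠ 0} → ℂ)) →ₗ[ℂ] A :=
    { toFun := fun z => (∑ i, ∑ j, z.1 i j • e i j) + ∑ a : {a // p a ≠ 0}, z.2 a • p a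
      map_add' := by
        intro x y
        simp only [Prod.fst_add, Prod.snd_add, Matrix.add_apply, Pi.add_apply, add_smul,
          Finset.sum_add_distrib]
        abel
      map_smul' := by
        intro c x
        simp only [Prod.smul_fst, Prod.smul_snd, Matrix.smul_apply, Pi.smul_apply, smul_eq_mul,
          mul_smul, Finset.smul_sum, smul_add, RingHom.id_apply] }
  have hL : ∀ z, L z = (∑ i, ∑ j, z.1 i j • e i j) + ∑ a : {a // p a ≠ 0}, z.2 a • p a :=
    fun _ => rfl
  have hsub : ∑ a : {a // p a ≠ 0}, p a = ∑ a, p a := by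
    rw [← Finset.sum_subtype (s := Finset.univ.filter fun a => p a ≠ 0) (by simp) p,
      Finset.sum_filter_ne_zero]
  have hone : L 1 = 1 := by
    rw [hL, ← hsum, ← hsub]
    simp [Matrix.one_apply]
  have hmul : ∀ x y, L (x * y) = L x * L y := by
    intro x y
    have h1 : (∑ i, ∑ j, x.1 i j • e i j) * (∑ i, ∑ j, y.1 i j • e i j)
        = ∑ i, ∑ j, (x * y).1 i j • e i j := by
      rw [Finset.sum_mul]
      refine Finset.sum_congr rfl fun i _ => ?_
      have h : ∀ j, (x.1 i j • e i j) * (∑ i, ∑ j, y.1 i j • e i j)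
          = ∑ l, (x.1 i j * y.1 j l) • e i l := by
        intro j
        simp only [Finset.mul_sum, smul_mul_smul_comm, hee, smul_ite, smul_zero]
        rw [Finset.sum_comm]
        simp
      rw [Finset.sum_mul, Finset.sum_congr rfl fun j _ => h j, Finset.sum_comm]
      simp only [Prod.fst_mul, Matrix.mul_apply, Finset.sum_smul]
    have h2 : (∑ a : {a // p a ≠ 0}, x.2 a • p a) * (∑ a : {a // p a ≠ 0}, y.2 a • p a)
        = ∑ a : {a // p a ≠ 0}, (x * y).2 a • p a := by
      simp only [Finset.sum_mul, Finset.mul_sum, smul_mul_smul_comm, hpp, Prod.snd_mul,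
        Pi.mul_apply, smul_ite, smul_zero, ← Subtype.ext_iff, Finset.mem_univ,
        if_true, Finset.sum_ite_eq']
    have h3 : (∑ i, ∑ j, x.1 i j • e i j) * (∑ a : {a // p a ≠ 0}, y.2 a • p a) = 0 := by
      simp [Finset.sum_mul, Finset.mul_sum, hep]
    have h4 : (∑ a : {a // p a ≠ 0}, x.2 a • p a) * (∑ i, ∑ j, y.1 i j • e i j) = 0 := by
      simp [Finset.sum_mul, Finset.mul_sum, hpe]
    rw [hL, hL, hL, add_mul, mul_add, mul_add, h1, h2, h3, h4, add_zero, zero_add]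
  let φ := AlgHom.ofLinearMap L hone hmul
  have hφ : ∀ z, φ z = L z := fun _ => rfl
  have hinj : Function.Injective φ := by
    rw [injective_iff_map_eq_zero]
    rintro ⟨B, c⟩ h
    rw [hφ, hL] at h
    ext i j
    -- `e i i * L (B, c) * e j i = B i j • e i i` and `p a * L (B, c) = c a • p a` recover the
    -- coordinates.
    · have := congrArg (fun z => e i i * z * e j i) h
      simp only [mul_add, Finset.mul_sum, Finset.sum_mul, mul_smul_comm, smul_mul_assoc,
        hee, hep, ite_mul, zero_mul, mul_zero, smul_zero, smul_ite, Finset.sum_const_zero,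
        add_zero] at this
      simpa [he, hee] using this
    · have := congrArg (fun z => p i * z) h
      simp only [mul_add, Finset.mul_sum, mul_smul_comm, hpe, hpp, mul_zero, smul_zero, smul_ite,
        Finset.sum_const_zero, ← Subtype.ext_iff,
        Finset.sum_ite_eq, Finset.mem_univ, if_true, zero_add] at this
      simpa [i.2] using this
  have hrange : φ.range = Algebra.adjoin ℂ S := by
    apply le_antisymm
    · rintro _ ⟨z, rfl⟩
      change L z ∈ _
      rw [hL]
      exact add_mem (sum_mem fun i _ => sum_mem fun j _ => Subalgebra.smul_mem _ (heS i j) _)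
        (sum_mem fun a _ => Subalgebra.smul_mem _ (hpS a) _)
    · refine Algebra.adjoin_le fun s hs => ?_
      suffices h : Submodule.span ℂ ({x | ∃ i j, x = e i j} ∪ {x | ∃ a, x = p a})
          ≤ Subalgebra.toSubmodule φ.range from h (hS s hs)
      rw [Submodule.span_le]
      rintro _ (⟨i, j, rfl⟩ | ⟨a, rfl⟩)
      · refine ⟨(Matrix.single i j 1, 0), ?_⟩
        change L _ = _
        simp [hL, Matrix.single_apply, ite_and, ite_smul]
      · by_cases ha : p a = 0
        · exact ⟨0, by simp [ha]⟩
        · refine ⟨(0, Pi.single ⟨a, ha⟩ 1), ?_⟩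
          change L _ = _
          simp [hL, Pi.single_apply]
  exact ⟨((AlgEquiv.ofInjective φ hinj).trans (Subalgebra.equivOfEq _ _ hrange)).symm⟩

/-- The pairs are those that index the nonzero idempotents `pMat o d b i t` below: each `i ≥ 1`
contributes `i - 1`, and one more when `q i ≥ 3`. -/
theorem card_pairs (q : ℕ → ℕ) (m : ℕ) :
    ((Finset.range (m + 1)).sigma fun i => (Finset.range i).filter
      fun t => t + 1 < i ∨ 3 ≤ q i).card
      = m * (m - 1) / 2 + ((Finset.Icc 1 m).filter fun i => 3 ≤ q i).card := by
  rw [Finset.card_sigma, ← Finset.sum_range_id_mul_two, Nat.mul_div_cancel _ two_pos]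
  induction m with
  | zero => simp
  | succ m ih =>
    rw [Finset.sum_range_succ, ih, Finset.sum_range_succ _ m,
      ← Finset.insert_Icc_right_eq_Icc_add_one (by omega),
      Finset.filter_insert]
    have : ((Finset.range (m + 1)).filter fun t => t + 1 < m + 1 ∨ 3 ≤ q (m + 1)).card
        = m + if 3 ≤ q (m+1) then 1 else 0 := by
      split_ifs with h
      · simp [h]
      · simp only [h, or_false, add_lt_add_iff_right, add_zero]
        rw [show (Finset.range (m+1)).filter (fun t => t < m) = Finset.range m by ext; simp; omega]
        simp
    rw [this]
    split_ifs with h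
    · rw [Finset.card_insert_of_notMem (by simp)]
      omega
    · omega

/-! ### The Terwilliger algebra of a homogeneous ultrametric space -/

/-- `d` is an ultrametric on `X` with values in `{0, …, m}`, all of whose balls of radius `t ≤ m`
have `b t` points, and passing from radius `t` to `t + 1` multiplies the size of a ball by
`q (t + 1) ≥ 2`. The relations `d x y = j` are then the classes of an iterated wreath product of
complete graphs. The point `o` plays the role of the base point and is not constrained. -/
structure HomUltra {X : Type*} [Fintype X] (o : X) (d : X → X → ℕ) (m : ℕ) (q b : ℕ → ℕ) :
    Prop where
  eq_zero : ∀ x y, d x y = 0 ↔ x = y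
  symm : ∀ x y, d x y = d y x
  ultra : ∀ x y z, d x z ≤ max (d x y) (d y z)
  le : ∀ x y, d x y ≤ m
  ball : ∀ x, ∀ t ≤ m, (Finset.univ.filter fun y => d x y ≤ t).card = b t
  step : ∀ t < m, b (t + 1) = q (t + 1) * b t
  two_le : ∀ i, 2 ≤ q i

section Ultra

variable {X : Type*} [Fintype X] (o : X) (d : X → X → ℕ) (b : ℕ → ℕ)

/-- The size of the sphere of radius `i` about `o`. -/
def sph (i : ℕ) : ℕ := (Finset.univ.filter fun y => d o y = i).card

/-- The matrix units: the block (sphere `i`) × (sphere `j`) filled with the constant `1 / k_j`, where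
`k_j` is the size of the sphere `j`. Normalising by `k_j` instead of `√(k_i k_j)` already gives
`U_ij U_jl = U_il`. -/
def uMat (i j : ℕ) : Matrix X X ℂ :=
  Matrix.of fun x y => if d o x = i ∧ d o y = j then (sph o d j : ℂ)⁻¹ else 0

/-- For `t < i`, the averaging operator over balls of radius `t`, restricted to the sphere of radius
`i` (which is a union of such balls); for `t ≥ i`, the averaging operator `U_ii` over the whole
sphere. For fixed `i` these form a decreasing chain of projections. -/
def wMat (i t : ℕ) : Matrix X X ℂ :=
  if t < i then Matrix.of fun x y => if d o x = i ∧ d x y ≤ t then (b t : ℂ)⁻¹ else 0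
  else uMat o d i i

/-- The successive differences of the chain of projections `wMat o d b i`. -/
def pMat (i t : ℕ) : Matrix X X ℂ := wMat o d b i t - wMat o d b i (t + 1)

/-- The adjacency matrix of the relation `d x y = j`. -/
def adjD (j : ℕ) : Matrix X X ℂ := Matrix.of fun x y => if d x y = j then 1 else 0

/-- The dual idempotent of the sphere of radius `j` about `o`. -/
def dualD [DecidableEq X] (j : ℕ) : Matrix X X ℂ :=
  Matrix.diagonal fun y => if d o y = j then 1 else 0

variable {o d b} {m : ℕ} {q : ℕ → ℕ}

theorem wMat_of_lt {i t : ℕ} (h : t < i) : wMat o d b i t =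
    Matrix.of fun x y => if d o x = i ∧ d x y ≤ t then (b t : ℂ)⁻¹ else 0 := if_pos h

theorem wMat_of_le {i t : ℕ} (h : i ≤ t) : wMat o d b i t = uMat o d i i := if_neg h.not_gt

theorem mul_eq_zero_of_sph {M N : Matrix X X ℂ} {j k : ℕ} (hjk : j ≠ k)
    (hM : ∀ x y, d o y ≠ j → M x y = 0) (hN : ∀ x y, d o x ≠ k → N x y = 0) : M * N = 0 := by
  ext x y
  rw [Matrix.mul_apply, Matrix.zero_apply]
  refine Finset.sum_eq_zero fun z _ => ?_
  by_cases h : d o z = j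
  · rw [hN z y (h ▸ hjk), mul_zero]
  · rw [hM x z h, zero_mul]

theorem uMat_left {i j : ℕ} (x y : X) (h : d o x ≠ i) : uMat o d i j x y = 0 := by
  simp [uMat, h]

theorem uMat_right {i j : ℕ} (x y : X) (h : d o y ≠ j) : uMat o d i j x y = 0 := by
  simp [uMat, h]

theorem wMat_left {i t : ℕ} (x y : X) (h : d o x ≠ i) : wMat o d b i t x y = 0 := by
  rcases lt_or_ge t i with ht | ht
  · simp [wMat_of_lt ht, h]
  · rw [wMat_of_le ht, uMat_left _ _ h]

theorem sum_adjD {Y : Type*} {d : Y → Y → ℕ} (t : ℕ) : ∑ j ∈ Finset.range (t + 1), adjD d j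
    = Matrix.of fun x y => if d x y ≤ t then (1 : ℂ) else 0 := by
  ext x y
  rw [Matrix.sum_apply]
  simp [adjD]

theorem pMat_left {i t : ℕ} (x y : X) (h : d o x ≠ i) : pMat o d b i t x y = 0 := by
  simp [pMat, wMat_left x y h]

namespace HomUltra

variable (H : HomUltra o d m q b)
include H

theorem le_iff {x y z : X} {t : ℕ} (h : d x y ≤ t) : d x z ≤ t ↔ d y z ≤ t := by
  have h1 := H.ultra x y z
  have h2 := H.ultra y x z
  rw [H.symm y x] at h2
  omega

theorem eq_iff {x y : X} {t i : ℕ} (h : d x y ≤ t) (hi : t < i) : d o x = i ↔ d o y = i := by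
  have h1 := H.ultra o x y
  have h2 := H.ultra o y x
  rw [H.symm y x] at h2
  omega

theorem b_zero : b 0 = 1 := by
  rw [← H.ball o 0 (Nat.zero_le _), Finset.card_eq_one]
  exact ⟨o, by ext; simp [H.eq_zero, eq_comm]⟩

theorem b_pos {t : ℕ} (ht : t ≤ m) : 0 < b t := by
  rw [← H.ball o t ht, Finset.card_pos]
  exact ⟨o, by simp [(H.eq_zero o o).2 rfl]⟩

theorem b_lt {t : ℕ} (ht : t < m) : b t < b (t + 1) := by
  rw [H.step t ht]
  have := H.b_pos ht.le
  have := H.two_le (t + 1)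
  nlinarith

theorem sph_zero : sph o d 0 = 1 := by
  rw [sph, Finset.card_eq_one]
  exact ⟨o, by ext; simp [H.eq_zero, eq_comm]⟩

theorem sph_succ {t : ℕ} (ht : t < m) : sph o d (t + 1) + b t = b (t + 1) := by
  classical
  rw [← H.ball o t ht.le, ← H.ball o (t + 1) ht, sph, ← Finset.card_union_of_disjoint]
  · congr 1
    ext y
    simp
    omega
  · rw [Finset.disjoint_left]
    intro y
    simp
    omega

theorem sph_pos {i : ℕ} (hi : i ≤ m) : 0 < sph o d i := by
  cases i with
  | zero => simp [H.sph_zero]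
  | succ t =>
    have := H.sph_succ hi
    have := H.b_lt hi
    omega

theorem wMat_symm (i t : ℕ) : (wMat o d b i t)ᵀ = wMat o d b i t := by
  ext x y
  rcases lt_or_ge t i with h | h
  · rw [Matrix.transpose_apply, wMat_of_lt h]
    simp only [Matrix.of_apply, H.symm y x]
    refine if_congr (and_congr_left fun hxy => (H.eq_iff hxy h).symm) rfl rfl
  · rw [Matrix.transpose_apply, wMat_of_le h]
    simp [uMat, and_comm]

theorem wMat_right {i t : ℕ} (x y : X) (h : d o y ≠ i) : wMat o d b i t x y = 0 := by
  rw [← H.wMat_symm, Matrix.transpose_apply, wMat_left _ _ h]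

/-- A matrix supported on the rows of the sphere `i` and constant along balls of radius `t` in its row
index is fixed by averaging over those balls. -/
theorem wMat_mul_of_inv {i t : ℕ} (hi : i ≤ m) (ht : t < i) {M : Matrix X X ℂ}
    (h1 : ∀ x y, d o x ≠ i → M x y = 0) (h2 : ∀ x z y, d x z ≤ t → M x y = M z y) :
    wMat o d b i t * M = M := by
  ext x y
  rw [Matrix.mul_apply, wMat_of_lt ht]
  by_cases hx : d o x = i
  · have : ∀ z, (if d o x = i ∧ d x z ≤ t then (b t : ℂ)⁻¹ else 0) * M z y
        = if d x z ≤ t then (b t : ℂ)⁻¹ * M x y else 0 := by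
      intro z
      by_cases hz : d x z ≤ t
      · simp [hx, hz, h2 x z y hz]
      · simp [hz]
    simp only [Matrix.of_apply, this]
    rw [← Finset.sum_filter, Finset.sum_const, H.ball x t (by omega), nsmul_eq_mul,
      mul_inv_cancel_left₀]
    exact_mod_cast (H.b_pos (by omega : t ≤ m)).ne'
  · simp [hx, h1 x y hx]

theorem mul_wMat_of_inv {i t : ℕ} (hi : i ≤ m) (ht : t < i) {M : Matrix X X ℂ}
    (h1 : ∀ x y, d o y ≠ i → M x y = 0) (h2 : ∀ x y z, d y z ≤ t → M x y = M x z) :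
    M * wMat o d b i t = M := by
  have := H.wMat_mul_of_inv hi ht (M := Mᵀ) (fun x y h => h1 y x h) (fun x z y h => h2 y x z h)
  rw [← Matrix.transpose_inj, Matrix.transpose_mul, H.wMat_symm, this]

theorem uMat_mul {i j k l : ℕ} (hj : j ≤ m) :
    uMat o d i j * uMat o d k l = if j = k then uMat o d i l else 0 := by
  split_ifs with h
  · subst h
    ext x y
    have : ∀ z, (if d o x = i ∧ d o z = j then (sph o d j : ℂ)⁻¹ else 0)
        * (if d o z = j ∧ d o y = l then (sph o d l : ℂ)⁻¹ else 0)
        = if d o z = j then (sph o d j : ℂ)⁻¹ *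
          (if d o x = i ∧ d o y = l then (sph o d l : ℂ)⁻¹ else 0) else 0 := by
      intro z
      by_cases h1 : d o x = i <;> by_cases h2 : d o z = j <;> simp [h1, h2]
    simp only [Matrix.mul_apply, uMat, Matrix.of_apply, this]
    rw [← Finset.sum_filter, Finset.sum_const, ← sph, nsmul_eq_mul, mul_inv_cancel_left₀]
    exact_mod_cast (H.sph_pos hj).ne'
  · exact mul_eq_zero_of_sph h uMat_right uMat_left

theorem wMat_mul_uMat {i t j : ℕ} (hi : i ≤ m) :
    wMat o d b i t * uMat o d i j = uMat o d i j := by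
  rcases lt_or_ge t i with ht | ht
  · refine H.wMat_mul_of_inv hi ht uMat_left fun x z y h => ?_
    simp [uMat, H.eq_iff h ht]
  · rw [wMat_of_le ht, H.uMat_mul hi, if_pos rfl]

theorem uMat_mul_wMat {i t j : ℕ} (hi : i ≤ m) :
    uMat o d j i * wMat o d b i t = uMat o d j i := by
  rcases lt_or_ge t i with ht | ht
  · refine H.mul_wMat_of_inv hi ht uMat_right fun x y z h => ?_
    simp [uMat, H.eq_iff h ht]
  · rw [wMat_of_le ht, H.uMat_mul hi, if_pos rfl]

theorem wMat_mul_wMat_of_le {i s t : ℕ} (hi : i ≤ m) (hst : s ≤ t) :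
    wMat o d b i s * wMat o d b i t = wMat o d b i t := by
  rcases lt_or_ge t i with ht | ht
  · refine H.wMat_mul_of_inv hi (by omega) wMat_left fun x z y h => ?_
    simp [wMat_of_lt ht, H.eq_iff (h.trans hst) ht, H.le_iff (h.trans hst)]
  · rw [wMat_of_le ht, H.wMat_mul_uMat hi]

/-- Averages over nested balls: the larger radius wins. -/
theorem wMat_mul_wMat {i s t : ℕ} (hi : i ≤ m) :
    wMat o d b i s * wMat o d b i t = wMat o d b i (max s t) := by
  rcases le_total s t with h | h
  · rw [max_eq_right h, H.wMat_mul_wMat_of_le hi h]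
  · rw [max_eq_left h, ← Matrix.transpose_inj, Matrix.transpose_mul, H.wMat_symm, H.wMat_symm,
      H.wMat_mul_wMat_of_le hi h]

theorem pMat_right {i t : ℕ} (x y : X) (h : d o y ≠ i) : pMat o d b i t x y = 0 := by
  simp [pMat, H.wMat_right x y h]

theorem pMat_mul_pMat_self {i s t : ℕ} (hi : i ≤ m) :
    pMat o d b i s * pMat o d b i t = if s = t then pMat o d b i s else 0 := by
  simp only [pMat, sub_mul, mul_sub, H.wMat_mul_wMat hi]
  rcases lt_trichotomy s t with h | rfl | h
  · rw [if_neg h.ne, max_eq_right h.le, max_eq_right (by omega : s + 1 ≤ t),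
      max_eq_right (by omega : s ≤ t + 1), max_eq_right (by omega : s + 1 ≤ t + 1)]
    abel
  · simp
  · rw [if_neg h.ne', max_eq_left h.le, max_eq_left (by omega : t ≤ s + 1),
      max_eq_left (by omega : t + 1 ≤ s), max_eq_left (by omega : t + 1 ≤ s + 1)]
    abel

theorem uMat_mul_pMat {i j k t : ℕ} (hk : k ≤ m) : uMat o d i j * pMat o d b k t = 0 := by
  by_cases h : j = k
  · subst h
    rw [pMat, mul_sub, H.uMat_mul_wMat hk, H.uMat_mul_wMat hk, sub_self]
  · exact mul_eq_zero_of_sph h uMat_right pMat_left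

theorem pMat_mul_uMat {i j k t : ℕ} (hk : k ≤ m) : pMat o d b k t * uMat o d i j = 0 := by
  by_cases h : k = i
  · subst h
    rw [pMat, sub_mul, H.wMat_mul_uMat hk, H.wMat_mul_uMat hk, sub_self]
  · exact mul_eq_zero_of_sph h H.pMat_right uMat_left

/-- The projections `W_t` and `W_{t+1}` of the chain have constant diagonals on the sphere `i`, equal
to the inverse sizes of the blocks averaged over. These blocks agree only if `t + 1 = i` and the
sphere `i`, of size `(q i - 1) * b (i - 1)`, is a single ball of radius `i - 1`, that is, if
`q i = 2`. -/
theorem pMat_ne_zero {i t : ℕ} (hi : i ≤ m) (ht : t < i) :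
    pMat o d b i t ≠ 0 ↔ t + 1 < i ∨ 3 ≤ q i := by
  obtain ⟨x, hx⟩ := Finset.card_pos.1 (H.sph_pos hi)
  have hx : d o x = i := by simpa using hx
  constructor
  · contrapose!
    rintro ⟨h1, h2⟩
    obtain rfl : i = t + 1 := by omega
    have hq : q (t + 1) = 2 := by have := H.two_le (t + 1); omega
    have hs : sph o d (t + 1) = b t := by
      have := H.sph_succ hi
      have := H.step t hi
      rw [hq] at this
      omega
    rw [pMat, sub_eq_zero, wMat_of_lt ht, wMat_of_le le_rfl]
    ext x y
    simp only [Matrix.of_apply, uMat, hs]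
    refine if_congr (and_congr_right fun hx => ?_) rfl rfl
    have hsub : (Finset.univ.filter fun y => d x y ≤ t) ⊆
        Finset.univ.filter fun y => d o y = t + 1 := by
      intro y hy
      simp only [Finset.mem_filter, Finset.mem_univ, true_and] at hy ⊢
      exact (H.eq_iff hy ht).1 hx
    have := Finset.eq_of_subset_of_card_le hsub
      (by rw [H.ball x t (by omega), ← hs, sph])
    simpa using Finset.ext_iff.1 this y
  · intro h h0
    have h1 := congrFun (congrFun h0 x) x
    have hxx : d x x = 0 := (H.eq_zero x x).2 rfl
    rw [pMat, Matrix.sub_apply, Matrix.zero_apply, sub_eq_zero] at h1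
    rcases Nat.lt_or_ge (t + 1) i with h2 | h2
    · rw [wMat_of_lt ht, wMat_of_lt h2] at h1
      simp only [Matrix.of_apply, hx, hxx, Nat.zero_le, and_self, if_true, _root_.inv_inj,
        Nat.cast_inj] at h1
      have := H.b_lt (by omega : t < m)
      omega
    · obtain rfl : i = t + 1 := by omega
      rw [wMat_of_lt ht, wMat_of_le h2] at h1
      simp only [Matrix.of_apply, uMat, hx, hxx, Nat.zero_le, and_self, if_true, _root_.inv_inj,
        Nat.cast_inj] at h1
      have h3 := H.sph_succ hi
      have h4 := H.step t hi
      have h5 := H.b_pos (by omega : t ≤ m)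
      have h6 : 3 ≤ q (t + 1) := by omega
      nlinarith

/-- The ball matrix of radius `t`, block by block: a point `x` outside the ball of radius `t` about `o`
has its `t`-ball inside its own sphere, whereas for `x` within that ball the `t`-ball of `x` is the
`t`-ball of `o`, that is, the union of the spheres of radius at most `t`. -/
theorem sum_adjD_eq {t : ℕ} (ht : t ≤ m) : ∑ j ∈ Finset.range (t + 1), adjD d j
    = ∑ i ∈ Finset.range (m + 1), if t < i then (b t : ℂ) • wMat o d b i t
      else ∑ j ∈ Finset.range (t + 1), (sph o d j : ℂ) • uMat o d i j := by
  rw [sum_adjD]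
  ext x y
  rw [Matrix.sum_apply, Finset.sum_eq_single (d o x)]
  · split_ifs with h
    · have := (H.b_pos ht).ne'
      simp [wMat_of_lt h, this]
    · have h : d o x ≤ t := by omega
      have h1 : ∀ j ∈ Finset.range (t + 1),
          ((sph o d j : ℂ) • uMat o d (d o x) j) x y = if d o y = j then 1 else 0 := by
        intro j hj
        have := (H.sph_pos (by simp at hj; omega : j ≤ m)).ne'
        simp [uMat, this]
      rw [Matrix.sum_apply, Finset.sum_congr rfl h1, Finset.sum_ite_eq]
      rw [H.symm] at h
      simp [H.le_iff h]
  · intro i _ hi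
    split_ifs with h
    · simp [wMat_left x y hi.symm]
    · rw [Matrix.sum_apply]
      exact Finset.sum_eq_zero fun j _ => by simp [uMat_left x y hi.symm]
  · intro h
    exact absurd (Finset.mem_range.2 (Nat.lt_succ_of_le (H.le o x))) h

variable [DecidableEq X]

/-- At radius `0` the balls are points, so the chain for the sphere `i` starts at the projection onto
that sphere. For `i = 0` this is the case `t ≥ i` of `wMat`, and the sphere is the single point `o`. -/
theorem dualD_eq (i : ℕ) : dualD o d i = wMat o d b i 0 := by
  ext x y
  rcases Nat.eq_zero_or_pos i with rfl | hi
  · rw [wMat_of_le le_rfl]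
    simp only [dualD, uMat, Matrix.of_apply, H.sph_zero, H.eq_zero, Matrix.diagonal_apply]
    by_cases hxy : x = y
    · simp [hxy]
    · have : ¬ (o = x ∧ o = y) := fun h => hxy (h.1.symm.trans h.2)
      simp [hxy, this]
  · rw [wMat_of_lt hi]
    simp only [dualD, Matrix.of_apply, Nat.le_zero, H.eq_zero, Matrix.diagonal_apply, H.b_zero]
    by_cases hxy : x = y
    · simp [hxy]
    · simp [hxy]

theorem sum_dualD : ∑ i ∈ Finset.range (m + 1), dualD o d i = 1 := by
  ext x y
  rw [Matrix.sum_apply]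
  by_cases hxy : x = y
  · subst hxy
    simp [dualD, Nat.lt_succ_of_le (H.le o x)]
  · simp [dualD, hxy]

theorem sum_eq_one : ∑ i : Fin (m + 1), uMat o d i i
    + ∑ i ∈ Finset.range (m + 1), ∑ t ∈ Finset.range i, pMat o d b i t = 1 := by
  rw [← H.sum_dualD, Fin.sum_univ_eq_sum_range (fun i => uMat o d i i), ← Finset.sum_add_distrib]
  refine Finset.sum_congr rfl fun i _ => ?_
  simp only [pMat]
  rw [Finset.sum_range_sub', H.dualD_eq, wMat_of_le (le_refl i), add_sub_cancel]

/-- The generated algebra is spanned by the `uMat` and `pMat`, to which `wedderburn_of_units`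
applies. -/
theorem terwilliger : Nonempty (↥(Algebra.adjoin ℂ
      ({M | ∃ j ≤ m, M = adjD d j} ∪ {M | ∃ j ≤ m, M = dualD o d j})) ≃ₐ[ℂ]
    (Matrix (Fin (m + 1)) (Fin (m + 1)) ℂ ×
      (Fin (m * (m - 1) / 2 + ((Finset.Icc 1 m).filter fun i => 3 ≤ q i).card) → ℂ))) := by
  classical
  set S : Set (Matrix X X ℂ) := {M | ∃ j ≤ m, M = adjD d j} ∪ {M | ∃ j ≤ m, M = dualD o d j}
    with hS
  let I : Finset (Σ _ : ℕ, ℕ) := (Finset.range (m + 1)).sigma fun i => Finset.range i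
  have hI : ∀ a ∈ I, a.1 ≤ m ∧ a.2 < a.1 := by
    intro a ha
    simpa [I, Nat.lt_succ_iff] using ha
  let e : Fin (m + 1) → Fin (m + 1) → Matrix X X ℂ := fun i j => uMat o d i j
  let p : I → Matrix X X ℂ := fun a => pMat o d b a.1.1 a.1.2
  have hA : ∀ j ≤ m, adjD d j ∈ Algebra.adjoin ℂ S := fun j hj =>
    Algebra.subset_adjoin (Or.inl ⟨j, hj, rfl⟩)
  have hE : ∀ j ≤ m, dualD o d j ∈ Algebra.adjoin ℂ S := fun j hj =>
    Algebra.subset_adjoin (Or.inr ⟨j, hj, rfl⟩)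
  have hN : ∀ t ≤ m, (Matrix.of fun x y => if d x y ≤ t then (1 : ℂ) else 0)
      ∈ Algebra.adjoin ℂ S := by
    intro t ht
    rw [← sum_adjD]
    exact sum_mem fun j hj => hA j (by simp at hj; omega)
  have hU : ∀ i ≤ m, ∀ j ≤ m, uMat o d i j ∈ Algebra.adjoin ℂ S := by
    intro i hi j hj
    have : uMat o d i j = (sph o d j : ℂ)⁻¹ • (dualD o d i *
        (Matrix.of fun x y => if d x y ≤ m then (1 : ℂ) else 0) * dualD o d j) := by
      ext x y
      by_cases h1 : d o x = i <;> by_cases h2 : d o y = j <;>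
        simp [dualD, uMat, H.le, h1, h2]
    rw [this]
    exact Subalgebra.smul_mem _ (mul_mem (mul_mem (hE i hi) (hN m le_rfl)) (hE j hj)) _
  have hW : ∀ i ≤ m, ∀ t, wMat o d b i t ∈ Algebra.adjoin ℂ S := by
    intro i hi t
    rcases lt_or_ge t i with h | h
    · have : wMat o d b i t = (b t : ℂ)⁻¹ • (dualD o d i *
          (Matrix.of fun x y => if d x y ≤ t then (1 : ℂ) else 0)) := by
        ext x y
        by_cases h1 : d o x = i <;> by_cases h2 : d x y ≤ t <;>
          simp [dualD, wMat_of_lt h, h1, h2]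
      rw [this]
      exact Subalgebra.smul_mem _ (mul_mem (hE i hi) (hN t (by omega))) _
    · rw [wMat_of_le h]
      exact hU i hi i hi
  let V := Submodule.span ℂ ({x | ∃ i j, x = e i j} ∪ {x | ∃ a, x = p a})
  have vU : ∀ i ≤ m, ∀ j ≤ m, uMat o d i j ∈ V := fun i hi j hj =>
    Submodule.subset_span (Or.inl ⟨⟨i, by omega⟩, ⟨j, by omega⟩, rfl⟩)
  have vP : ∀ i ≤ m, ∀ t < i, pMat o d b i t ∈ V := fun i hi t ht =>
    Submodule.subset_span (Or.inr ⟨⟨⟨i, t⟩, by simp [I]; omega⟩, rfl⟩)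
  have vW : ∀ i ≤ m, ∀ t ≤ i, wMat o d b i t ∈ V := by
    intro i hi t ht
    induction ht using Nat.decreasingInduction with
    | self => rw [wMat_of_le le_rfl]; exact vU i hi i hi
    | of_succ t ht ih =>
      rw [← sub_add_cancel (wMat o d b i t) (wMat o d b i (t + 1))]
      exact add_mem (vP i hi t ht) ih
  have vN : ∀ t ≤ m, ∑ j ∈ Finset.range (t + 1), adjD d j ∈ V := by
    intro t ht
    rw [H.sum_adjD_eq ht]
    refine sum_mem fun i hi => ?_
    have hi : i ≤ m := by simp at hi; omega
    split_ifs with h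
    · exact V.smul_mem _ (vW i hi t h.le)
    · exact sum_mem fun j hj => V.smul_mem _ (vU i hi j (by simp at hj; omega))
  have vS : ∀ s ∈ S, s ∈ V := by
    rintro _ (⟨j, hj, rfl⟩ | ⟨j, hj, rfl⟩)
    · cases j with
      | zero => simpa using vN 0 hj
      | succ j =>
        have := sub_mem (vN (j + 1) hj) (vN j (by omega))
        rwa [Finset.sum_range_succ _ (j + 1), add_sub_cancel_left] at this
    · rw [H.dualD_eq]
      exact vW j hj 0 (Nat.zero_le _)
  obtain ⟨φ⟩ := wedderburn_of_units e p
    (by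
      intro i j k l
      simp only [e, H.uMat_mul (Nat.le_of_lt_succ j.2), Fin.ext_iff])
    (by
      rintro ⟨⟨i, s⟩, ha⟩ ⟨⟨j, t⟩, hb⟩
      have ha := hI _ ha
      by_cases hij : i = j
      · subst hij
        simp [p, H.pMat_mul_pMat_self ha.1]
      · simp only [p, Subtype.mk.injEq, Sigma.mk.injEq, hij, false_and, if_false]
        exact mul_eq_zero_of_sph hij H.pMat_right pMat_left)
    (fun i j a => H.uMat_mul_pMat (hI a a.2).1)
    (fun i j a => H.pMat_mul_uMat (hI a a.2).1)
    (by
      rw [← H.sum_eq_one, Finset.sum_coe_sort I fun a => pMat o d b a.1 a.2, Finset.sum_sigma])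
    (by
      intro i h
      obtain ⟨x, hx⟩ := Finset.card_pos.1 (H.sph_pos (Nat.le_of_lt_succ i.2))
      have hx : d o x = i := by simpa using hx
      have := congrFun (congrFun h x) x
      simp [e, uMat, hx, (H.sph_pos (Nat.le_of_lt_succ i.2)).ne'] at this)
    S (fun i j => hU i (Nat.le_of_lt_succ i.2) j (Nat.le_of_lt_succ j.2))
    (fun a => sub_mem (hW _ (hI a a.2).1 _) (hW _ (hI a a.2).1 _)) vS
  have hcard : Fintype.card {a // p a ≠ 0}
      = m * (m - 1) / 2 + ((Finset.Icc 1 m).filter fun i => 3 ≤ q i).card := by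
    rw [← card_pairs, ← Fintype.card_coe]
    refine Fintype.card_congr ⟨fun a => ⟨a.1.1, ?_⟩, fun a => ⟨⟨a.1, ?_⟩, ?_⟩,
      fun _ => rfl, fun _ => rfl⟩
    · have h := hI _ a.1.2
      have h1 := (H.pMat_ne_zero h.1 h.2).1 a.2
      simp only [Finset.mem_sigma, Finset.mem_range, Finset.mem_filter]
      exact ⟨by omega, h.2, h1⟩
    · have h := a.2
      simp only [Finset.mem_sigma, Finset.mem_range, Finset.mem_filter] at h
      simp only [I, Finset.mem_sigma, Finset.mem_range]
      exact ⟨h.1, h.2.1⟩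
    · have h := a.2
      simp only [Finset.mem_sigma, Finset.mem_range, Finset.mem_filter] at h
      exact (H.pMat_ne_zero (by omega) h.2.1).2 h.2.2
  let r := Fintype.equivFinOfCardEq hcard
  exact ⟨φ.trans (AlgEquiv.prodCongr AlgEquiv.refl (AlgEquiv.piCongrLeft ℂ (fun _ => ℂ) r))⟩

end HomUltra
end Ultra

/-! ### The wreath product as an ultrametric space -/

theorem level_le_iff (m : ℕ) (q : ℕ → ℕ) (v : Vtx m q) (t : ℕ) :
    level m q v ≤ t ↔ ∀ i : Fin m, t ≤ i → v i = 0 := by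
  simp only [level, Finset.sup_le_iff, Finset.mem_filter, Finset.mem_univ, true_and]
  refine forall_congr' fun i => ?_
  rw [← not_imp_not, not_not, not_le, Nat.lt_succ_iff]

theorem dist_le_iff (m : ℕ) (q : ℕ → ℕ) (x y : Vtx m q) (t : ℕ) :
    level m q (x - y) ≤ t ↔ ∀ i : Fin m, t ≤ i → x i = y i := by
  simp [level_le_iff, sub_eq_zero]

/-- `A_j` is the relation that the last position where `x` and `y` differ is `j`. -/
theorem adjOne_eq (m : ℕ) (q : ℕ → ℕ) {j : ℕ} (hj : j ≤ m) :
    AdjOne m q j = adjD (fun x y => level m q (x - y)) j := by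
  ext x y
  simp only [AdjOne, adjD, Matrix.of_apply]
  cases j with
  | zero =>
    have h := dist_le_iff m q x y 0
    simp only [Nat.le_zero, Nat.zero_le, forall_const] at h
    simp [h, Finset.prod_ite_zero]
  | succ j =>
    have h1 := dist_le_iff m q x y (j + 1)
    have h2 := dist_le_iff m q x y j
    have h3 : level m q (x - y) = j + 1 ↔
        level m q (x - y) ≤ j + 1 ∧ ¬ level m q (x - y) ≤ j := by omega
    have hf : ∀ i : Fin m, (if (i : ℕ) + 1 < j + 1 then (1 : ℂ)
        else if (i : ℕ) + 1 = j + 1 then (if x i = y i then 0 else 1)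
        else if x i = y i then 1 else 0)
        = if (j + 1 ≤ (i : ℕ) → x i = y i) ∧ ((i : ℕ) = j → x i ≠ y i) then 1 else 0 := by
      intro i
      rcases lt_trichotomy (i : ℕ) j with h | h | h
      · rw [if_pos (by omega), if_pos ⟨fun _ => by omega, fun _ => by omega⟩]
      · rw [if_neg (by omega), if_pos (by omega), ← ite_not]
        exact if_congr ⟨fun h' => ⟨fun _ => by omega, fun _ => h'⟩, fun h' => h'.2 h⟩ rfl rfl
      · rw [if_neg (by omega), if_neg (by omega)]
        exact if_congr ⟨fun h' => ⟨fun _ => h', fun _ => by omega⟩, fun h' => h'.1 h⟩ rfl rfl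
    rw [Finset.prod_congr rfl fun i _ => hf i, Finset.prod_ite_zero]
    simp only [Finset.mem_univ, forall_true_left, Finset.prod_const_one]
    refine if_congr ?_ rfl rfl
    rw [h3, h1, h2]
    constructor
    · intro h
      exact ⟨fun i => (h i).1, fun h' => (h ⟨j, hj⟩).2 rfl (h' ⟨j, hj⟩ le_rfl)⟩
    · rintro ⟨h, h'⟩ i
      refine ⟨h i, fun hij heq => h' fun k hk => ?_⟩
      rcases hk.eq_or_lt with hk | hk
      · rwa [← Fin.ext (hij.trans hk)]
      · exact h k hk

theorem homUltra (m : ℕ) (q : ℕ → ℕ) [∀ i, NeZero (q i)] (hq : ∀ i, 2 ≤ q i) :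
    HomUltra (0 : Vtx m q) (fun x y => level m q (x - y)) m q
      (fun t => ∏ s ∈ Finset.range t, q (s + 1)) where
  eq_zero x y := by
    rw [← Nat.le_zero, dist_le_iff, funext_iff]
    simp
  symm x y := by
    refine eq_of_forall_ge_iff fun t => ?_
    simp only [dist_le_iff, eq_comm]
  ultra x y z := by
    rw [dist_le_iff]
    intro i hi
    exact ((dist_le_iff m q x y _).1 (le_max_left _ _) i hi).trans
      ((dist_le_iff m q y z _).1 (le_max_right _ _) i hi)
  le x y := by
    rw [dist_le_iff]
    intro i hi
    omega
  ball x t ht := by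
    have : (Finset.univ.filter fun y => level m q (x - y) ≤ t)
        = Fintype.piFinset fun i : Fin m => if (i : ℕ) < t then Finset.univ else {x i} := by
      ext y
      simp only [Finset.mem_filter, Finset.mem_univ, true_and, dist_le_iff, Fintype.mem_piFinset]
      refine forall_congr' fun i => ?_
      split_ifs with h
      · simp [h]
      · simp [not_lt.1 h, eq_comm]
    rw [this, Fintype.card_piFinset]
    have h2 : ∀ i : Fin m, (if (i : ℕ) < t then Finset.univ else {x i}).card
        = if (i : ℕ) < t then q ((i : ℕ) + 1) else 1 := by
      intro i
      split_ifs
      · rw [Finset.card_univ, ZMod.card]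
      · simp
    rw [Finset.prod_congr rfl fun i _ => h2 i,
      Fin.prod_univ_eq_prod_range (fun i => if i < t then q (i + 1) else 1), ← Finset.prod_filter]
    congr 1
    ext i
    simp
    omega
  step t _ := by rw [Finset.prod_range_succ, mul_comm]
  two_le := hq

/-- With `ε = #{i : 1 ≤ i ≤ m, q_i ≥ 3}`, the Terwilliger algebra of `𝔛(m,1)`
w.r.t. the base point `0` is ℂ-algebra isomorphic to
`Mat_{m+1}(ℂ) × ℂ^{m(m−1)/2 + ε}`. -/
theorem stmt11 (m : ℕ) (hm : 1 ≤ m) (q : ℕ → ℕ) [∀ i, NeZero (q i)]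
    (hq : ∀ i, 2 ≤ q i) :
    Nonempty
      (↥(Ter1 m q) ≃ₐ[ℂ]
        (Matrix (Fin (m + 1)) (Fin (m + 1)) ℂ ×
          (Fin (m * (m - 1) / 2 + ((Finset.Icc 1 m).filter fun i => 3 ≤ q i).card)
            → ℂ))) := by
  have hT : Ter1 m q = Algebra.adjoin ℂ
      ({M | ∃ j ≤ m, M = adjD (fun x y => level m q (x - y)) j} ∪
        {M | ∃ j ≤ m, M = dualD (0 : Vtx m q) (fun x y => level m q (x - y)) j}) := by
    have hd : ∀ j ≤ m, DualIdemOne m q j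
        = dualD (0 : Vtx m q) (fun x y => level m q (x - y)) j := by
      intro j hj
      simp only [DualIdemOne, dualD, adjOne_eq m q hj, adjD, Matrix.of_apply]
    rw [Ter1]
    congr 2 <;> ext M <;> refine exists_congr fun j => and_congr_right fun hj => ?_
    · rw [adjOne_eq m q hj]
    · rw [hd j hj]
  rw [hT]
  exact (homUltra m q hq).terwilliger

end OHS

end
end

section
/- For λ,μ ∈ I(m,n) one has 𝐀_μ·L_λ(E_•) = K_μ(λ; q_1,…,q_m)·L_λ(E_•), and L_μ(E_•) ∘ 𝐀_λ = |X|^{−n}·K_μ(λ; q_m,…,q_1)·𝐀_λ (Hadamard, i.e. entrywise, product). In other words, the entries of the first and second eigenmatrices of the ordered Hamming scheme 𝔛(m,n) are the multivariate Krawtchouk polynomials K_μ(λ; q_1,…,q_m) and K_μ(λ; q_m,…,q_1). -/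
/-!
Everything reduces to `𝔛(m,1)`. There the matrices `A_j` and `E_i` are tensor products of
`I`, `J` and multiples or differences of these, so `A_j E_i = P_j(i) E_i` can be checked one
tensor factor at a time (`AdjOne_mul_IdemOne`). Likewise the entry of `E_g` at a pair `(x, y)`
depends only on the level of `x - y`, and equals `|X|⁻¹ P_g(level (x - y))` for the reversed
parameter sequence, because reversal exchanges valencies and multiplicities (`IdemOne_apply`).

To pass to `n` factors, expand the generating function of the Krawtchouk polynomials: for any
`f : {1,…,n} → {0,…,m}` with fibre sizes `λ`, the product `∏_j (Σ_i P_i(j) z_i)^{λ_j}` is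
`∏_i (Σ_k P_k(f(i)) z_k)`, so `K_μ(λ)` is the sum of `∏_i P_{g(i)}(f(i))` over all `g` with fibre
sizes `μ` (`Kraw_eq_sum`). Since `𝐀_μ = L_μ(A_•)` (`AdjN_eq_Lmat`), the product `𝐀_μ L_λ(E_•)` is a
sum over `g` and `f` of Kronecker products of the `A_{g(i)} E_{f(i)}`, which gives the first
identity. The second follows by taking for `f` the function of levels of `x_i - y_i`.
-/


open Matrix BigOperators

noncomputable section

namespace OHS

variable (m : ℕ) (q : ℕ → ℕ)

variable (n : ℕ)

/-! ### Levels and the relations of `𝔛(m,1)` -/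

lemma eq_of_level_lt {m : ℕ} {q : ℕ → ℕ} {x y : Vtx m q} {s : Fin m}
    (h : level m q (x - y) < (s : ℕ) + 1) : x s = y s := by
  by_contra hne
  have hs : s ∈ Finset.univ.filter fun i : Fin m => (x - y) i ≠ 0 := by
    simpa [sub_eq_zero] using hne
  exact absurd (Finset.le_sup (f := fun i : Fin m => (i : ℕ) + 1) hs) (not_le.mpr h)

lemma ne_of_level_eq {m : ℕ} {q : ℕ → ℕ} {x y : Vtx m q} {s : Fin m}
    (h : level m q (x - y) = (s : ℕ) + 1) : x s ≠ y s := by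
  intro hs
  refine absurd h (ne_of_lt ?_)
  refine (Finset.sup_lt_iff (Nat.succ_pos _)).mpr fun i hi => ?_
  by_contra! hlt
  obtain rfl | hsi := (show s ≤ i from by
    rw [Fin.le_def]; simp at hlt; omega).eq_or_lt
  · simp [hs] at hi
  · have := eq_of_level_lt (x := x) (y := y) (s := i)
      (by rw [h]; rw [Fin.lt_def] at hsi; omega)
    simp [this] at hi

lemma level_le {m : ℕ} {q : ℕ → ℕ} (v : Vtx m q) : level m q v ≤ m :=
  Finset.sup_le fun i _ => i.2

/-- The level of a vertex of `𝔛(m,1)`, as an index of a relation of the scheme. -/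
def levelFin {m : ℕ} {q : ℕ → ℕ} (v : Vtx m q) : Fin (m + 1) :=
  ⟨level m q v, Nat.lt_succ_of_le (level_le v)⟩

/-- The tensor-product form of `A_j` agrees with its description by levels. -/
lemma AdjOne_eq_ite {m : ℕ} {q : ℕ → ℕ} (j : Fin (m + 1)) (x y : Vtx m q) :
    AdjOne m q j x y = if levelFin (x - y) = j then 1 else 0 := by
  have hj : ((levelFin (x - y) = j) ↔ level m q (x - y) = j) := by
    simp [levelFin, Fin.ext_iff]
  simp only [hj, AdjOne, Matrix.of_apply]
  split_ifs with h
  · refine Finset.prod_eq_one fun s _ => ?_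
    split_ifs with h1 h2 h3 h4
    · rfl
    · exact absurd h3 (ne_of_level_eq (h.trans h2.symm))
    · rfl
    · rfl
    · exact absurd (eq_of_level_lt (by omega)) h4
  · by_contra hne
    rw [← ne_eq, Finset.prod_ne_zero_iff] at hne
    refine h (le_antisymm ?_ ?_)
    · refine Finset.sup_le fun i hi => ?_
      by_contra! hlt
      have := hne i (Finset.mem_univ _)
      rw [if_neg (by omega), if_neg (by omega)] at this
      simp [sub_eq_zero] at hi this
      exact hi this
    · by_contra! hlt
      have hjm := j.2
      have := hne ⟨(j : ℕ) - 1, by omega⟩ (Finset.mem_univ _)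
      have e : (j : ℕ) - 1 + 1 = j := by omega
      simp only [e, lt_irrefl, if_false, if_true] at this
      rw [if_pos (eq_of_level_lt (by simpa [e] using hlt))] at this
      exact this rfl

/-! ### Eigenmatrices of `𝔛(m,1)` -/

/-- The `s`-th tensor factor of `IdemOne m q i`. -/
def idemFac {m : ℕ} (q : ℕ → ℕ) (i : ℕ) (s : Fin m) (a b : ZMod (q ((s : ℕ) + 1))) : ℂ :=
  if (s : ℕ) + 1 < m - i + 1 then ((q ((s : ℕ) + 1) : ℂ))⁻¹
  else if (s : ℕ) + 1 = m - i + 1 then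
    (if a = b then (1 : ℂ) else 0) - ((q ((s : ℕ) + 1) : ℂ))⁻¹
  else if a = b then 1 else 0

/-- The `s`-th tensor factor of `AdjOne m q j`. -/
def adjFac {m : ℕ} (q : ℕ → ℕ) (j : ℕ) (s : Fin m) (a b : ZMod (q ((s : ℕ) + 1))) : ℂ :=
  if (s : ℕ) + 1 < j then (1 : ℂ)
  else if (s : ℕ) + 1 = j then (if a = b then 0 else 1)
  else if a = b then 1 else 0

/-- The eigenvalue of the `s`-th tensor factor of `A_j` on that of `E_i`, for `i + j ≤ m + 1`. -/
def eigFac {m : ℕ} (q : ℕ → ℕ) (i j : ℕ) (s : Fin m) : ℂ :=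
  if (s : ℕ) + 1 < j then (q ((s : ℕ) + 1) : ℂ)
  else if (s : ℕ) + 1 = j then (if i + j < m + 1 then (q ((s : ℕ) + 1) : ℂ) - 1 else -1)
  else 1

lemma sum_adjFac_mul_idemFac {m : ℕ} (q : ℕ → ℕ) [∀ i, NeZero (q i)] {i j : ℕ}
    (hi : i ≤ m) (hij : i + j ≤ m + 1) (s : Fin m) (a c : ZMod (q ((s : ℕ) + 1))) :
    ∑ b, adjFac q j s a b * idemFac q i s b c = eigFac q i j s * idemFac q i s a c := by
  have hq0 : (q ((s : ℕ) + 1) : ℂ) ≠ 0 := Nat.cast_ne_zero.mpr (NeZero.ne _)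
  have hne : ∀ b, (if a = b then (0 : ℂ) else 1) = 1 - if a = b then 1 else 0 := by
    intro b; split_ifs <;> simp
  have hs := s.2
  rcases lt_trichotomy ((s : ℕ) + 1) j with h | h | h
  · have : (s : ℕ) + 1 < m - i + 1 := by omega
    simp [adjFac, eigFac, idemFac, h, this, ZMod.card]
  · by_cases hlt : i + j < m + 1
    · simp [adjFac, eigFac, idemFac, h, hlt, hne, sub_mul, Finset.sum_sub_distrib, ZMod.card,
        show j < m - i + 1 by omega]
    · have h2 : j = m - i + 1 := by omega
      simp [adjFac, eigFac, idemFac, h, hlt, hne, ← h2, sub_mul, Finset.sum_sub_distrib,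
        ZMod.card]
  · simp [adjFac, eigFac, h.not_gt, h.ne']

lemma prod_eigFac {m : ℕ} (q : ℕ → ℕ) (hq : ∀ i, 2 ≤ q i) {i j : ℕ}
    (hi : i ≤ m) (hj : j ≤ m) (hij : i + j ≤ m + 1) :
    ∏ s : Fin m, eigFac q i j s = PEnt m q j i := by
  have hsub : ∀ k, ((q k - 1 : ℕ) : ℂ) = (q k : ℂ) - 1 := fun k => by
    rw [Nat.cast_sub (by have := hq k; omega)]; simp
  by_cases h : i + j < m + 1
  · rw [PEnt, if_pos (by omega), valency, Nat.cast_prod]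
    refine Finset.prod_congr rfl fun s _ => ?_
    rw [eigFac, if_pos h]
    split_ifs <;> simp [hsub]
  · have hne : (q j : ℂ) - 1 ≠ 0 := by
      rw [← hsub, Nat.cast_ne_zero]; have := hq j; omega
    rw [PEnt, if_neg (by omega), if_pos (by omega), eq_div_iff hne, valency, Nat.cast_prod]
    -- spreading each scalar over the product, as a factor at position `j`, makes the identity
    -- factorwise
    let s₀ : Fin m := ⟨j - 1, by omega⟩
    have e : ∀ b : ℂ, b = ∏ s : Fin m, if s = s₀ then b else 1 := fun b => by simp
    rw [e ((q j : ℂ) - 1), neg_eq_neg_one_mul, e (-1), ← Finset.prod_mul_distrib,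
      ← Finset.prod_mul_distrib]
    refine Finset.prod_congr rfl fun s _ => ?_
    have hs : s = s₀ ↔ (s : ℕ) + 1 = j := by
      rw [Fin.ext_iff]; simp only [s₀]; omega
    simp only [eigFac, hs, h, if_false]
    split_ifs with h1 h2 h2
    · omega
    · simp
    · rw [h2, hsub]
    · simp

/-- `A_j E_i = P_j(i) E_i` in `𝔛(m,1)`. -/
lemma AdjOne_mul_IdemOne {m : ℕ} (q : ℕ → ℕ) [∀ i, NeZero (q i)] (hq : ∀ i, 2 ≤ q i) {i j : ℕ}
    (hi : i ≤ m) (hj : j ≤ m) (x z : Vtx m q) :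
    ∑ y, AdjOne m q j x y * IdemOne m q i y z = PEnt m q j i * IdemOne m q i x z := by
  have key : ∑ y, AdjOne m q j x y * IdemOne m q i y z =
      ∏ s : Fin m, ∑ b, adjFac q j s (x s) b * idemFac q i s b (z s) := by
    rw [Finset.prod_univ_sum, Fintype.piFinset_univ]
    refine Finset.sum_congr rfl fun y _ => ?_
    rw [Finset.prod_mul_distrib]
    rfl
  rw [key]
  by_cases hij : i + j ≤ m + 1
  · simp_rw [sum_adjFac_mul_idemFac q hi hij]
    rw [Finset.prod_mul_distrib, prod_eigFac q hq hi hj hij]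
    rfl
  · -- the factor at position `m - i + 1 < j` is `J (I - J̃) = 0`
    rw [PEnt, if_neg (by omega), if_neg (by omega), zero_mul]
    refine Finset.prod_eq_zero (Finset.mem_univ (⟨m - i, by omega⟩ : Fin m)) ?_
    have hq0 : (q (m - i + 1) : ℂ) ≠ 0 := Nat.cast_ne_zero.mpr (NeZero.ne _)
    simp [adjFac, idemFac, show m - i + 1 < j by omega, Finset.sum_sub_distrib, ZMod.card, hq0]

/-- Reversing the parameter sequence turns valencies into multiplicities. -/
lemma valency_rev {m : ℕ} (q : ℕ → ℕ) {g : ℕ} (hg : g ≤ m) :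
    valency m (fun s => q (m + 1 - s)) g = multiplicity m q g := by
  rw [valency, multiplicity, ← Equiv.prod_comp Fin.revPerm]
  refine Finset.prod_congr rfl fun s _ => ?_
  have hs := s.2
  have e : m + 1 - (((Fin.revPerm s : Fin m) : ℕ) + 1) = (s : ℕ) + 1 := by
    simp [Fin.val_rev]; omega
  have e' : ((Fin.revPerm s : Fin m) : ℕ) + 1 = m - s := by
    simp [Fin.val_rev]; omega
  rw [e, e']
  split_ifs <;> first | rfl | omega

/-- The entries of `|X| E_g` are those of the second eigenmatrix of `𝔛(m,1)`, which is the first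
eigenmatrix for the reversed parameter sequence. -/
lemma IdemOne_apply {m : ℕ} (q : ℕ → ℕ) [∀ i, NeZero (q i)] (hq : ∀ i, 2 ≤ q i) {g : ℕ}
    (hg : g ≤ m) (x y : Vtx m q) :
    IdemOne m q g x y = (Fintype.card (Vtx m q) : ℂ)⁻¹ *
      PEnt m (fun s => q (m + 1 - s)) g (level m q (x - y)) := by
  have hsub : ∀ k, ((q k - 1 : ℕ) : ℂ) = (q k : ℂ) - 1 := fun k => by
    rw [Nat.cast_sub (by have := hq k; omega)]; simp
  have hq0 : ∀ k, (q k : ℂ) ≠ 0 := fun k => Nat.cast_ne_zero.mpr (NeZero.ne _)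
  have hcard : (Fintype.card (Vtx m q) : ℂ) = ∏ s : Fin m, (q ((s : ℕ) + 1) : ℂ) := by
    simp [Vtx, Fintype.card_pi, ZMod.card]
  have hcard0 : (Fintype.card (Vtx m q) : ℂ) ≠ 0 := by
    rw [hcard]; exact Finset.prod_ne_zero_iff.mpr fun s _ => hq0 _
  have hfac : IdemOne m q g x y = ∏ s : Fin m, idemFac q g s (x s) (y s) := rfl
  rw [eq_inv_mul_iff_mul_eq₀ hcard0, PEnt, valency_rev q hg, hfac, hcard,
    ← Finset.prod_mul_distrib, multiplicity]
  have hl := level_le (x - y)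
  rcases lt_trichotomy (g + level m q (x - y)) (m + 1) with h | h | h
  · rw [if_pos h, Nat.cast_prod]
    refine Finset.prod_congr rfl fun s _ => ?_
    rw [idemFac]
    have := hq0 ((s : ℕ) + 1)
    split_ifs with h1 h2 h3 h4 h5 h6 h7 <;>
      first
      | omega
      | exact absurd (eq_of_level_lt (by omega)) ‹¬ x s = y s›
      | (simp [hsub]; try field_simp)
  · have hne : (q (m + 1 - g) : ℂ) - 1 ≠ 0 := by
      rw [← hsub, Nat.cast_ne_zero]; have := hq (m + 1 - g); omega
    rw [if_neg h.not_lt, if_pos h, eq_div_iff hne, Nat.cast_prod]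
    -- likewise the scalars are placed at position `m - g + 1`, the last one where `x` and `y` differ
    let s₀ : Fin m := ⟨m - g, by omega⟩
    have e : ∀ b : ℂ, b = ∏ s : Fin m, if s = s₀ then b else 1 := fun b => by simp
    rw [e ((q (m + 1 - g) : ℂ) - 1), neg_eq_neg_one_mul, e (-1), ← Finset.prod_mul_distrib,
      ← Finset.prod_mul_distrib]
    refine Finset.prod_congr rfl fun s _ => ?_
    have hs : s = s₀ ↔ (s : ℕ) + 1 = m - g + 1 := by
      rw [Fin.ext_iff]; simp only [s₀]; omega
    have := hq0 ((s : ℕ) + 1)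
    have hgm : m + 1 - g = m - g + 1 := by omega
    simp only [idemFac, hs]
    rcases lt_trichotomy ((s : ℕ) + 1) (m - g + 1) with h1 | h1 | h1
    · rw [if_pos h1, if_neg h1.ne, if_neg h1.ne, if_neg h1.not_gt, if_neg h1.ne,
        mul_inv_cancel₀ this]
      simp
    · have hxy : x s ≠ y s := ne_of_level_eq (by omega)
      rw [h1] at this
      simp [h1, hxy, hsub, hgm, this]
    · have hxy : x s = y s := eq_of_level_lt (by omega)
      rw [if_neg h1.not_gt, if_neg h1.ne', if_pos hxy, if_neg h1.ne', if_neg h1.ne', if_pos h1]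
      simp
  · rw [if_neg h.not_gt, if_neg h.ne']
    -- the position where `x - y` has its last nonzero entry carries a factor `I` of `E_g`
    let s : Fin m := ⟨level m q (x - y) - 1, by omega⟩
    have hs : (s : ℕ) + 1 = level m q (x - y) := by simp only [s]; omega
    refine Finset.prod_eq_zero (Finset.mem_univ s) ?_
    rw [idemFac, if_neg (by omega), if_neg (by omega), if_neg (ne_of_level_eq hs.symm), mul_zero]

/-! ### Generating functions and `n` factors -/

/-- The coefficient of `z^μ` in a product of `n` linear forms. -/
lemma coeff_prod_linear {k n : ℕ} (a : Fin n → Fin k → ℂ) (mu : Fin k → ℕ) :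
    MvPolynomial.coeff (Finsupp.equivFunOnFinite.symm mu)
      (∏ i : Fin n, ∑ j : Fin k, MvPolynomial.C (a i j) * MvPolynomial.X j) =
    ∑ g ∈ Finset.univ.filter (fun g : Fin n → Fin k =>
        ∀ j, (Finset.univ.filter fun i => g i = j).card = mu j),
      ∏ i, a i (g i) := by
  rw [Finset.prod_univ_sum, Fintype.piFinset_univ, MvPolynomial.coeff_sum, Finset.sum_filter]
  refine Finset.sum_congr rfl fun g _ => ?_
  have hX : ∏ i, (MvPolynomial.X (g i) : MvPolynomial (Fin k) ℂ) =
      MvPolynomial.monomial (∑ i, Finsupp.single (g i) 1) 1 := by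
    rw [MvPolynomial.monomial_sum_one]
    rfl
  have hiff : (∑ i, Finsupp.single (g i) 1 = Finsupp.equivFunOnFinite.symm mu) ↔
      ∀ j, (Finset.univ.filter fun i => g i = j).card = mu j := by
    rw [DFunLike.ext_iff]
    refine forall_congr' fun j => ?_
    simp [Finsupp.finsetSum_apply, Finsupp.single_apply]
  rw [Finset.prod_mul_distrib, hX, ← map_prod, MvPolynomial.coeff_C_mul,
    MvPolynomial.coeff_monomial]
  simp only [hiff, mul_ite, mul_one, mul_zero]

/-- `K_μ(λ)` in terms of any one function with fibre sizes `λ`. -/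
lemma Kraw_eq_sum {m n : ℕ} (r : ℕ → ℕ) (mu lam : Fin (m + 1) → ℕ) (f : Fin n → Fin (m + 1))
    (hf : ∀ j, (Finset.univ.filter fun i => f i = j).card = lam j) :
    Kraw m r mu lam =
      ∑ g ∈ Finset.univ.filter (fun g : Fin n → Fin (m + 1) =>
          ∀ j, (Finset.univ.filter fun i => g i = j).card = mu j),
        ∏ i, PEnt m r (g i) (f i) := by
  rw [← coeff_prod_linear (fun i j => PEnt m r j (f i)) mu, Kraw]
  congr 1
  rw [← Finset.prod_fiberwise' Finset.univ f (fun j => ∑ i : Fin (m + 1),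
    MvPolynomial.C (PEnt m r (i : ℕ) (j : ℕ)) * MvPolynomial.X i)]
  simp [Finset.prod_const, hf]

lemma hasShape_iff {m n : ℕ} {q : ℕ → ℕ} (x : Fin n → Vtx m q) (lam : Fin (m + 1) → ℕ) :
    hasShape m q n x lam ↔
      ∀ j, (Finset.univ.filter fun i => levelFin (x i) = j).card = lam j := by
  simp only [hasShape, levelFin, Fin.ext_iff]

lemma Lmat_apply {m n : ℕ} {q : ℕ → ℕ} (M : Fin (m + 1) → Matrix (Vtx m q) (Vtx m q) ℂ)
    (mu : Fin (m + 1) → ℕ) (x y : Fin n → Vtx m q) :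
    Lmat m q n M mu x y =
      ∑ g ∈ Finset.univ.filter (fun g : Fin n → Fin (m + 1) =>
          ∀ j, (Finset.univ.filter fun i => g i = j).card = mu j),
        ∏ i, M (g i) (x i) (y i) := by
  simp only [Lmat, Matrix.of_apply]
  congr!

lemma AdjN_eq_Lmat {m n : ℕ} {q : ℕ → ℕ} (mu : Fin (m + 1) → ℕ) :
    AdjN m q n mu = Lmat m q n (fun j : Fin (m + 1) => AdjOne m q (j : ℕ)) mu := by
  ext x y
  have hg : ∀ g : Fin n → Fin (m + 1), ∏ i, AdjOne m q (g i) (x i) (y i) =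
      if (fun i => levelFin (x i - y i)) = g then 1 else 0 := by
    intro g
    simp only [AdjOne_eq_ite, Finset.prod_ite_zero, Finset.prod_const_one, Finset.mem_univ,
      true_imp_iff, funext_iff]
  rw [Lmat_apply]
  simp only [hg, AdjN, Matrix.of_apply, Finset.sum_ite_eq, Finset.mem_filter, Finset.mem_univ,
    true_and, hasShape_iff]

/-- `𝐀_μ·L_λ(E_•) = K_μ(λ;q_1,…,q_m)·L_λ(E_•)` and
`L_μ(E_•) ∘ 𝐀_λ = |X|⁻ⁿ·K_μ(λ;q_m,…,q_1)·𝐀_λ`: the eigenmatrix entries of the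
ordered Hamming scheme are multivariate Krawtchouk polynomials. -/
theorem stmt15 (m n : ℕ) (hm : 1 ≤ m) (hn : 1 ≤ n) (q : ℕ → ℕ)
    [∀ i, NeZero (q i)] (hq : ∀ i, 2 ≤ q i) :
    ∀ lam ∈ ShapeSet m n, ∀ mu ∈ ShapeSet m n,
      AdjN m q n mu * Lmat m q n (fun j : Fin (m + 1) => IdemOne m q (j : ℕ)) lam =
        Kraw m q mu lam •
          Lmat m q n (fun j : Fin (m + 1) => IdemOne m q (j : ℕ)) lam ∧
      (Lmat m q n (fun j : Fin (m + 1) => IdemOne m q (j : ℕ)) mu).hadamard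
          (AdjN m q n lam) =
        (((Fintype.card (Vtx m q) : ℂ) ^ n)⁻¹ *
            Kraw m (fun s => q (m + 1 - s)) mu lam) • AdjN m q n lam := by
  intro lam _ mu _
  constructor
  · ext x z
    rw [AdjN_eq_Lmat, Matrix.mul_apply]
    simp only [Lmat_apply, Matrix.smul_apply, smul_eq_mul, Finset.sum_mul_sum]
    rw [Finset.sum_comm, Finset.mul_sum]
    simp_rw [Finset.sum_comm (s := Finset.univ (α := Fin n → Vtx m q))]
    rw [Finset.sum_comm]
    refine Finset.sum_congr rfl fun f hf => ?_
    rw [Kraw_eq_sum q mu lam f (Finset.mem_filter.mp hf).2, Finset.sum_mul]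
    refine Finset.sum_congr rfl fun g _ => ?_
    simp_rw [← Finset.prod_mul_distrib]
    rw [← Fintype.piFinset_univ, ← Finset.prod_univ_sum (fun _ => Finset.univ)
      (fun i y => AdjOne m q (g i) (x i) y * IdemOne m q (f i) y (z i))]
    exact Finset.prod_congr rfl fun i _ =>
      AdjOne_mul_IdemOne q hq (Nat.lt_succ_iff.mp (f i).2) (Nat.lt_succ_iff.mp (g i).2) _ _
  · ext x y
    simp only [Matrix.hadamard_apply, Matrix.smul_apply, smul_eq_mul, AdjN, Matrix.of_apply]
    split_ifs with h
    · rw [mul_one, mul_one, Kraw_eq_sum _ mu lam _ ((hasShape_iff _ _).mp h), Finset.mul_sum]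
      rw [Lmat_apply]
      refine Finset.sum_congr rfl fun g _ => ?_
      simp_rw [IdemOne_apply q hq (Nat.lt_succ_iff.mp (g _).2)]
      rw [Finset.prod_mul_distrib, Finset.prod_const, Finset.card_univ, Fintype.card_fin, inv_pow]
      rfl
    · simp

end OHS

end
end

section
/- Assume m ≥ 2 or q_1 ≥ 3. Then the cardinality of Ω(m,n) equals the binomial coefficient C(|Λ(m)|+n−1, n) if and only if one of the following holds: m = 1; m = 2; m = 3 and q_2 = 2; or n = 1. -/
/-!
Regard `Λ(m)` as the edge set of a bipartite graph between row indices and column indices. Matrices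
supported on `Λ(m)` with total sum `n` are multisets of `n` edges, so there are
`C(|Λ(m)|+n−1, n)` of them, and `Ω(m,n)` is the image of this set of matrices under the map `margins`
taking a matrix to its row and column sums (`image_margins`). Hence the two cardinalities agree iff
`margins` is injective on these matrices (`card_omega_iff`).

For `n = 1` a matrix is a single edge, which is determined by its endpoints (`injOn_one`). For
`m ≤ 2`, and for `m = 3` with `q_2 = 2`, the graph is a forest; peeling off leaves recovers
each entry from the margins (`injOn_small`). In all remaining cases the rows and columns `m−1, m` span
a 4-cycle, and the two perfect matchings of that cycle have equal margins; adding `n−2` copies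
of one fixed edge to both matchings contradicts injectivity for every `n ≥ 2` (`not_injOn`).
-/

open Matrix BigOperators

noncomputable section

namespace OHS

variable (m : ℕ) (q : ℕ → ℕ)

variable (n : ℕ)

/-- `Λ(m)` with its indices shifted to start at `0`, as a set of pairs in `Fin m`. -/
def lamFin (m : ℕ) (q : ℕ → ℕ) : Finset (Fin m × Fin m) :=
  Finset.univ.filter fun p => ((p.1 : ℕ) + 1, (p.2 : ℕ) + 1) ∈ LamSet m q

theorem mem_lamFin {m : ℕ} {q : ℕ → ℕ} (i j : Fin m) :
    (i, j) ∈ lamFin m q ↔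
      m + 1 < (i + 1 : ℕ) + (j + 1) ∨ ((i + 1 : ℕ) + (j + 1) = m + 1 ∧ 3 ≤ q (i + 1)) := by
  have hi := i.2
  have hj := j.2
  simp only [lamFin, LamSet, Finset.mem_filter, Finset.mem_univ, true_and, Finset.mem_product,
    Finset.mem_Icc]
  constructor
  · rintro ⟨-, h⟩
    exact h
  · intro h
    exact ⟨by omega, h⟩

theorem card_lamFin (m : ℕ) (q : ℕ → ℕ) : (lamFin m q).card = (LamSet m q).card := by
  refine Finset.card_bij (fun p _ => ((p.1 : ℕ) + 1, (p.2 : ℕ) + 1)) ?_ ?_ ?_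
  · intro p hp
    exact (Finset.mem_filter.1 hp).2
  · rintro ⟨a, b⟩ - ⟨c, d⟩ - h
    simp only [Prod.mk.injEq, Nat.add_right_cancel_iff] at h
    exact Prod.ext (Fin.ext h.1) (Fin.ext h.2)
  · rintro ⟨a, b⟩ h
    have h' := h
    simp only [LamSet, Finset.mem_filter, Finset.mem_product, Finset.mem_Icc] at h'
    have ha : a - 1 + 1 = a := by omega
    have hb : b - 1 + 1 = b := by omega
    refine ⟨(⟨a - 1, by omega⟩, ⟨b - 1, by omega⟩), ?_, ?_⟩
    · simp only [lamFin, Finset.mem_filter, Finset.mem_univ, true_and, ha, hb]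
      exact h
    · simp only [ha, hb]

/-- The pair (row sums, column sums) of an `m × m` matrix of naturals. -/
def margins (m : ℕ) (f : Fin m × Fin m →₀ ℕ) : (Fin m → ℕ) × (Fin m → ℕ) :=
  (fun i => ∑ j, f (i, j), fun j => ∑ i, f (i, j))

/-- The `m × m` matrices of naturals supported on `Λ(m)` with total sum `n`. -/
abbrev matrices (m : ℕ) (q : ℕ → ℕ) (n : ℕ) : Finset (Fin m × Fin m →₀ ℕ) :=
  (lamFin m q).finsuppAntidiag n

theorem mem_matrices {m n : ℕ} {q : ℕ → ℕ} {f : Fin m × Fin m →₀ ℕ} :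
    f ∈ matrices m q n ↔ ∑ i, ∑ j, f (i, j) = n ∧ ∀ p, p ∉ lamFin m q → f p = 0 := by
  rw [Finset.mem_finsuppAntidiag, ← Fintype.sum_prod_type]
  have key : (f.support ⊆ lamFin m q) ↔ ∀ p, p ∉ lamFin m q → f p = 0 := by
    simp only [Finset.subset_iff, Finsupp.mem_support_iff]
    exact forall_congr' fun p => not_imp_comm
  rw [key]
  refine and_congr_left fun h => ?_
  rw [Finset.sum_subset (Finset.subset_univ (lamFin m q)) fun p _ hp => h p hp]

theorem image_margins (m n : ℕ) (q : ℕ → ℕ) :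
    (matrices m q n).image (margins m) = OmegaSet m q n := by
  ext ⟨lam, mu⟩
  simp only [Finset.mem_image, mem_matrices, OmegaSet, Ctuples, Finset.mem_filter,
    Finset.mem_product, Fintype.mem_piFinset, Finset.mem_range, margins, Prod.mk.injEq]
  constructor
  · rintro ⟨f, ⟨hsum, hf⟩, hrow, hcol⟩
    have hl : ∑ i, lam i = n := by rw [← hrow]; exact hsum
    have hm : ∑ j, mu j = n := by rw [← hcol, Finset.sum_comm]; exact hsum
    have bl : ∀ i, lam i < n + 1 := fun i =>
      Nat.lt_succ_of_le (hl ▸ Finset.single_le_sum (fun _ _ => Nat.zero_le _) (Finset.mem_univ i))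
    have bm : ∀ i, mu i < n + 1 := fun i =>
      Nat.lt_succ_of_le (hm ▸ Finset.single_le_sum (fun _ _ => Nat.zero_le _) (Finset.mem_univ i))
    refine ⟨⟨⟨bl, hl⟩, bm, hm⟩, fun i j => f (i, j), ?_⟩
    simp only [ThetaSet, Finset.mem_filter, Fintype.mem_piFinset, Finset.mem_range]
    refine ⟨fun i j => lt_of_le_of_lt ?_ (bl i), fun i j h => hf _ ?_,
      fun i => congrFun hrow i, fun j => congrFun hcol j⟩
    · rw [← hrow]
      exact Finset.single_le_sum (f := fun j => f (i, j)) (fun _ _ => Nat.zero_le _)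
        (Finset.mem_univ j)
    · simpa [lamFin] using h
  · rintro ⟨⟨⟨-, hl⟩, -⟩, c, hc⟩
    simp only [ThetaSet, Finset.mem_filter] at hc
    obtain ⟨-, h0, hrow, hcol⟩ := hc
    refine ⟨Finsupp.equivFunOnFinite.symm fun p => c p.1 p.2, ⟨?_, ?_⟩, ?_, ?_⟩
    · simp [hrow, hl]
    · rintro ⟨i, j⟩ hp
      exact h0 i j (by simpa [lamFin] using hp)
    · funext i
      simp [hrow]
    · funext j
      simp [hcol]

/-- The cardinality identity says exactly that a matrix supported on `Λ(m)` is determined by its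
margins. -/
theorem card_omega_iff (m n : ℕ) (q : ℕ → ℕ) :
    (OmegaSet m q n).card = Nat.choose ((LamSet m q).card + n - 1) n ↔
      Set.InjOn (margins m) (matrices m q n) := by
  rw [← image_margins, ← card_lamFin, ← Finset.card_finsuppAntidiag_nat_eq_choose]
  exact Finset.card_image_iff

/-- In a matrix with total sum `1`, any two nonzero entries coincide. -/
theorem unique_of_sum_one {m : ℕ} {q : ℕ → ℕ} {f : Fin m × Fin m →₀ ℕ}
    (hf : f ∈ matrices m q 1) {p p' : Fin m × Fin m} (hp : f p ≠ 0) (hp' : f p' ≠ 0) :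
    p = p' := by
  by_contra hne
  have hs := (mem_matrices.1 hf).1
  rw [← Fintype.sum_prod_type (f := fun p => f p)] at hs
  have := Finset.sum_le_sum_of_subset (f := fun p => f p) (Finset.subset_univ {p, p'})
  rw [Finset.sum_pair hne, hs] at this
  omega

theorem le_one_of_sum_one {m : ℕ} {q : ℕ → ℕ} {f : Fin m × Fin m →₀ ℕ}
    (hf : f ∈ matrices m q 1) (p : Fin m × Fin m) : f p ≤ 1 := by
  have hs := (mem_matrices.1 hf).1
  rw [← Fintype.sum_prod_type (f := fun p => f p)] at hs
  rw [← hs]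
  exact Finset.single_le_sum (f := fun p => f p) (fun _ _ => Nat.zero_le _) (Finset.mem_univ p)

/-- A single edge is determined by its endpoints: the nonzero row and column sums of `g` locate
its unique nonzero entry at the one of `f`. -/
theorem ne_zero_of_margins_eq {m : ℕ} {q : ℕ → ℕ} {f g : Fin m × Fin m →₀ ℕ}
    (hg : g ∈ matrices m q 1) (h : margins m f = margins m g) {p : Fin m × Fin m}
    (hp : f p ≠ 0) : g p ≠ 0 := by
  obtain ⟨a, b⟩ := p
  have hr : ∑ j, g (a, j) ≠ 0 := by
    intro h0
    replace h0 : ∑ j, f (a, j) = 0 := (congrFun (congrArg Prod.fst h) a).trans h0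
    exact hp (Finset.sum_eq_zero_iff.1 h0 b (Finset.mem_univ b))
  have hc : ∑ i, g (i, b) ≠ 0 := by
    intro h0
    replace h0 : ∑ i, f (i, b) = 0 := (congrFun (congrArg Prod.snd h) b).trans h0
    exact hp (Finset.sum_eq_zero_iff.1 h0 a (Finset.mem_univ a))
  obtain ⟨j, -, hj⟩ := Finset.exists_ne_zero_of_sum_ne_zero hr
  obtain ⟨i, -, hi⟩ := Finset.exists_ne_zero_of_sum_ne_zero hc
  have hjb : j = b := congrArg Prod.snd (unique_of_sum_one hg hj hi)
  exact hjb ▸ hj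

theorem injOn_one (m : ℕ) (q : ℕ → ℕ) : Set.InjOn (margins m) (matrices m q 1) := by
  intro f hf g hg h
  ext p
  have h1 := le_one_of_sum_one hf p
  have h2 := le_one_of_sum_one hg p
  have h3 := ne_zero_of_margins_eq (p := p) hg h
  have h4 := ne_zero_of_margins_eq (p := p) hf h.symm
  omega

theorem injOn_small {m : ℕ} (n : ℕ) {q : ℕ → ℕ} (hm : m = 1 ∨ m = 2 ∨ (m = 3 ∧ q 2 = 2)) :
    Set.InjOn (margins m) (matrices m q n) := by
  intro f hf g hg h
  have hf0 := (mem_matrices.1 hf).2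
  have hg0 := (mem_matrices.1 hg).2
  have hr : ∀ i, ∑ j, f (i, j) = ∑ j, g (i, j) := fun i => congrFun (congrArg Prod.fst h) i
  have hc : ∀ j, ∑ i, f (i, j) = ∑ i, g (i, j) := fun j => congrFun (congrArg Prod.snd h) j
  ext ⟨i, j⟩
  rcases hm with rfl | rfl | ⟨rfl, hq2⟩
  · have := hr 0
    simp only [Fin.sum_univ_succ, Fin.sum_univ_zero] at this
    fin_cases i; fin_cases j
    simpa using this
  · have e : ((0 : Fin 2), (0 : Fin 2)) ∉ lamFin 2 q := by simp [mem_lamFin]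
    have f1 := hf0 _ e
    have g1 := hg0 _ e
    have r0 := hr 0
    have r1 := hr 1
    have c0 := hc 0
    have c1 := hc 1
    simp only [Fin.sum_univ_two] at r0 r1 c0 c1
    fin_cases i <;> fin_cases j <;> simp only [Fin.zero_eta, Fin.mk_one] <;> omega
  · have e00 : ((0 : Fin 3), (0 : Fin 3)) ∉ lamFin 3 q := by simp [mem_lamFin]
    have e01 : ((0 : Fin 3), (1 : Fin 3)) ∉ lamFin 3 q := by simp [mem_lamFin]
    have e10 : ((1 : Fin 3), (0 : Fin 3)) ∉ lamFin 3 q := by simp [mem_lamFin]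
    have e11 : ((1 : Fin 3), (1 : Fin 3)) ∉ lamFin 3 q := by simp [mem_lamFin, hq2]
    have := hf0 _ e00
    have := hg0 _ e00
    have := hf0 _ e01
    have := hg0 _ e01
    have := hf0 _ e10
    have := hg0 _ e10
    have := hf0 _ e11
    have := hg0 _ e11
    have r0 := hr 0
    have r1 := hr 1
    have r2 := hr 2
    have c0 := hc 0
    have c1 := hc 1
    have c2 := hc 2
    simp only [Fin.sum_univ_three] at r0 r1 r2 c0 c1 c2
    fin_cases i <;> fin_cases j <;> simp only [Fin.zero_eta, Fin.mk_one, Fin.reduceFinMk] <;> omega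

theorem margins_add {m : ℕ} (f g : Fin m × Fin m →₀ ℕ) :
    margins m (f + g) = margins m f + margins m g := by
  simp only [margins, Finsupp.add_apply, Finset.sum_add_distrib]
  rfl

theorem margins_single {m : ℕ} (a b : Fin m) (k : ℕ) :
    margins m (Finsupp.single (a, b) k) = (Pi.single a k, Pi.single b k) := by
  refine Prod.ext (funext fun i => ?_) (funext fun j => ?_)
  · by_cases h : a = i
    · subst h
      simp [margins, Finsupp.single_apply]
    · simp [margins, Finsupp.single_apply, h, Ne.symm h]
  · by_cases h : b = j
    · subst h
      simp [margins, Finsupp.single_apply]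
    · simp [margins, Finsupp.single_apply, h, Ne.symm h]

/-- Three edges of multiplicities `1`, `1`, `n - 2` form a matrix with total sum `n`. -/
theorem add_mem_matrices {m n : ℕ} {q : ℕ → ℕ} (hn : 2 ≤ n) {x y z : Fin m × Fin m}
    (hx : x ∈ lamFin m q) (hy : y ∈ lamFin m q) (hz : z ∈ lamFin m q) :
    Finsupp.single x 1 + Finsupp.single y 1 + Finsupp.single z (n - 2) ∈ matrices m q n := by
  rw [Finset.mem_finsuppAntidiag']
  refine ⟨?_, ?_⟩
  · rw [Finsupp.sum_add_index' (fun _ => rfl) (fun _ _ _ => rfl),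
      Finsupp.sum_add_index' (fun _ => rfl) (fun _ _ _ => rfl)]
    rw [Finsupp.sum_single_index rfl, Finsupp.sum_single_index rfl, Finsupp.sum_single_index rfl]
    omega
  · intro p hp
    rw [Finsupp.mem_support_iff] at hp
    by_contra hl
    refine hp ?_
    have h1 : x ≠ p := fun h => hl (h ▸ hx)
    have h2 : y ≠ p := fun h => hl (h ▸ hy)
    have h3 : z ≠ p := fun h => hl (h ▸ hz)
    simp [h1, h2, h3]

/-- A 4-cycle in `Λ(m)` on the rows and columns `m−1, m` destroys injectivity. -/
theorem not_injOn {m n : ℕ} {q : ℕ → ℕ} (hm : 4 ≤ m ∨ (m = 3 ∧ 3 ≤ q 2)) (hn : 2 ≤ n) :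
    ¬ Set.InjOn (margins m) (matrices m q n) := by
  intro hinj
  obtain ⟨a, ha⟩ : ∃ a : Fin m, (a : ℕ) = m - 2 := ⟨⟨m - 2, by omega⟩, rfl⟩
  obtain ⟨b, hb⟩ : ∃ b : Fin m, (b : ℕ) = m - 1 := ⟨⟨m - 1, by omega⟩, rfl⟩
  have hne : a ≠ b := fun h => by
    have := congrArg Fin.val h
    omega
  have haa : (a, a) ∈ lamFin m q := by
    rw [mem_lamFin]
    rcases hm with h | ⟨rfl, h⟩
    · left
      omega
    · right
      rw [ha]
      exact ⟨rfl, h⟩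
  have hab : (a, b) ∈ lamFin m q := by
    rw [mem_lamFin]
    left
    omega
  have hba : (b, a) ∈ lamFin m q := by
    rw [mem_lamFin]
    left
    omega
  have hbb : (b, b) ∈ lamFin m q := by
    rw [mem_lamFin]
    left
    omega
  have heq := hinj (add_mem_matrices hn haa hbb hbb) (add_mem_matrices hn hab hba hbb) (by
    simp only [margins_add, margins_single, Prod.mk_add_mk]
    rw [add_comm (Pi.single a 1 : Fin m → ℕ) (Pi.single b 1)])
  have := DFunLike.congr_fun heq (a, b)
  simp [hne, hne.symm] at this

/-- Assume `m ≥ 2` or `q_1 ≥ 3`. Then `|Ω(m,n)| = C(|Λ(m)|+n−1, n)` if and only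
if `m = 1`, `m = 2`, (`m = 3` and `q_2 = 2`), or `n = 1`. -/
theorem stmt16 (m n : ℕ) (hm : 1 ≤ m) (hn : 1 ≤ n) (q : ℕ → ℕ)
    (hq : ∀ i, 2 ≤ q i) (hmq : 2 ≤ m ∨ 3 ≤ q 1) :
    (OmegaSet m q n).card = Nat.choose ((LamSet m q).card + n - 1) n ↔
      (m = 1 ∨ m = 2 ∨ (m = 3 ∧ q 2 = 2) ∨ n = 1) := by
  rw [card_omega_iff]
  constructor
  · intro hinj
    by_contra hcon
    have h2 := hq 2
    exact not_injOn (by omega) (by omega) hinj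
  · rintro (h | h | h | rfl)
    · exact injOn_small n (Or.inl h)
    · exact injOn_small n (Or.inr (Or.inl h))
    · exact injOn_small n (Or.inr (Or.inr h))
    · exact injOn_one m q

end OHS

end
end
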